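/- Let k ∈ (0,1) and α ∈ (0, K(k)). Set q := e^{−πK'(k)/K(k)}, H(x) := θ₁(πx/(2K(k)); q), Θ(x) := θ₄(πx/(2K(k)); q), c₀ := 1 + k², β := [1 − 2(1+k)²·sn(α;k)²/(1 + k·sn(α;k)²)²]·Θ(2α)/Θ(0), γ := Θ(2α)/Θ(0), κ := Z(α;k) + k·sn(α;k)·cn(α;k)·dn(α;k)/(1 + k·sn(α;k)²), and c := c₀ + 2k(1+k)²·(1 − k·sn(α;k)²)·sn(α;k)·dn(α;k)·cn(α;k)/( [Z(α;k)(1 + k·sn(α;k)²) + k·sn(α;k)·dn(α;k)·cn(α;k)]·(1 + k·sn(α;k)²)² ). Fix x₀ ∈ ℝ and, for (x,t) ∈ ℝ², set ξ := x + c₀t and η := κ·(x + ct + x₀). Then the denominator D(x,t) := Θ(ξ+2α)e^{−2η} + Θ(ξ−2α)e^{2η} + 2γΘ(ξ) is strictly positive for all (x,t), and the function û(x,t) := (H(K(k))/Θ(K(k)))·( H(ξ+2α)e^{−2η} + H(ξ−2α)e^{2η} + 2βH(ξ) ) / D(x,t) is smooth on ℝ × ℝ and satisfies the mKdV equation û_t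 − 6û²û_x + û_xxx = 0 at every point (x,t). -/

import Mathlib

noncomputable section

/-- Partial derivative in the first (spatial) variable. -/
def ux (u : ℝ × ℝ → ℝ) (p : ℝ × ℝ) : ℝ := deriv (fun y => u (y, p.2)) p.1

/-- Partial derivative in the second (temporal) variable. -/
def ut (u : ℝ × ℝ → ℝ) (p : ℝ × ℝ) : ℝ := deriv (fun s => u (p.1, s)) p.2

/-- The complete elliptic integral of the first kind. -/
def Kcomp (k : ℝ) : ℝ :=
  ∫ θ in (0 : ℝ)..(Real.pi / 2), (Real.sqrt (1 - k ^ 2 * Real.sin θ ^ 2))⁻¹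

/-- The complete elliptic integral of the second kind. -/
def Ecomp (k : ℝ) : ℝ :=
  ∫ θ in (0 : ℝ)..(Real.pi / 2), Real.sqrt (1 - k ^ 2 * Real.sin θ ^ 2)

/-- The Jacobi zeta function `Z(α;k) = ∫₀^α dn(t;k)² dt − (E/K)·α`. -/
def Zjac (k : ℝ) (dn : ℝ → ℝ) (α : ℝ) : ℝ :=
  (∫ t in (0 : ℝ)..α, (dn t) ^ 2) - (Ecomp k / Kcomp k) * α

/-- The Jacobi theta function `θ₁(y;q) = 2·Σ_{n≥1} (−1)^{n−1} q^{(n−1/2)²} sin((2n−1)y)`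
(the sum runs over `n : ℕ`, representing the index `n + 1 ≥ 1`). -/
def theta1R (q y : ℝ) : ℝ :=
  2 * ∑' n : ℕ, (-1 : ℝ) ^ n * q ^ (((n : ℝ) + 1 / 2) ^ 2) *
    Real.sin ((2 * (n : ℝ) + 1) * y)

/-- The Jacobi theta function `θ₄(y;q) = 1 + 2·Σ_{n≥1} (−1)ⁿ q^{n²} cos(2ny)`
(the sum runs over `n : ℕ`, representing the index `n + 1 ≥ 1`). -/
def theta4R (q y : ℝ) : ℝ :=
  1 + 2 * ∑' n : ℕ, (-1 : ℝ) ^ (n + 1) * q ^ ((n + 1) ^ 2) *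
    Real.cos (2 * ((n : ℝ) + 1) * y)

/-- The nome `q = e^{−πK'(k)/K(k)}` with `K'(k) = K(√(1−k²))`. -/
def nome (k : ℝ) : ℝ :=
  Real.exp (-(Real.pi * Kcomp (Real.sqrt (1 - k ^ 2)) / Kcomp k))

/-- `H(x) = θ₁(πx/(2K(k)); q)`. -/
def Hf (k x : ℝ) : ℝ := theta1R (nome k) (Real.pi * x / (2 * Kcomp k))

/-- `Θ(x) = θ₄(πx/(2K(k)); q)`. -/
def THf (k x : ℝ) : ℝ := theta4R (nome k) (Real.pi * x / (2 * Kcomp k))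

/-- The parameter `β` of the dark breather. -/
def betaPar (k : ℝ) (sn : ℝ → ℝ) (α : ℝ) : ℝ :=
  (1 - 2 * (1 + k) ^ 2 * (sn α) ^ 2 / (1 + k * (sn α) ^ 2) ^ 2) * (THf k (2 * α) / THf k 0)

/-- The parameter `γ` of the dark breather. -/
def gammaPar (k α : ℝ) : ℝ := THf k (2 * α) / THf k 0

/-- The inverse localization width `κ` of the dark breather. -/
def kapWidth (k : ℝ) (sn cn dn : ℝ → ℝ) (α : ℝ) : ℝ :=
  Zjac k dn α + k * sn α * cn α * dn α / (1 + k * (sn α) ^ 2)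

/-- The dark breather speed `c`. -/
def cSpeed (k : ℝ) (sn cn dn : ℝ → ℝ) (α : ℝ) : ℝ :=
  (1 + k ^ 2) +
    2 * k * (1 + k) ^ 2 * (1 - k * (sn α) ^ 2) * sn α * dn α * cn α /
      ((Zjac k dn α * (1 + k * (sn α) ^ 2) + k * sn α * dn α * cn α) *
        (1 + k * (sn α) ^ 2) ^ 2)

/-- The traveling variable `ξ = x + (1+k²)t`. -/
def xiVar (k : ℝ) (w : ℝ × ℝ) : ℝ := w.1 + (1 + k ^ 2) * w.2

/-- The breather variable `η = κ(x + ct + x₀)`. -/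
def etaVar (k : ℝ) (sn cn dn : ℝ → ℝ) (α x₀ : ℝ) (w : ℝ × ℝ) : ℝ :=
  kapWidth k sn cn dn α * (w.1 + cSpeed k sn cn dn α * w.2 + x₀)

/-- The denominator of the dark-breather solution. -/
def Dden (k : ℝ) (sn cn dn : ℝ → ℝ) (α x₀ : ℝ) (w : ℝ × ℝ) : ℝ :=
  THf k (xiVar k w + 2 * α) * Real.exp (-(2 * etaVar k sn cn dn α x₀ w)) +
  THf k (xiVar k w - 2 * α) * Real.exp (2 * etaVar k sn cn dn α x₀ w) +
  2 * gammaPar k α * THf k (xiVar k w)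

/-- The dark-breather solution `û` of the defocusing mKdV equation. -/
def uhat (k : ℝ) (sn cn dn : ℝ → ℝ) (α x₀ : ℝ) (w : ℝ × ℝ) : ℝ :=
  (Hf k (Kcomp k) / THf k (Kcomp k)) *
    (Hf k (xiVar k w + 2 * α) * Real.exp (-(2 * etaVar k sn cn dn α x₀ w)) +
     Hf k (xiVar k w - 2 * α) * Real.exp (2 * etaVar k sn cn dn α x₀ w) +
     2 * betaPar k sn α * Hf k (xiVar k w)) / Dden k sn cn dn α x₀ w

section SP1

structure Jac (k : ℝ) (s c d : ℝ → ℝ) : Prop where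
  k0 : 0 < k
  k1 : k < 1
  hs : ∀ x, HasDerivAt s (c x * d x) x
  hc : ∀ x, HasDerivAt c (-(s x * d x)) x
  hd : ∀ x, HasDerivAt d (-(k ^ 2 * s x * c x)) x
  s0 : s 0 = 0
  c0 : c 0 = 1
  d0 : d 0 = 1

theorem const_of_hasDerivAt_zero {f : ℝ → ℝ} (h : ∀ x, HasDerivAt f 0 x) (x y : ℝ) : f x = f y :=
  is_const_of_deriv_eq_zero (fun x => (h x).differentiableAt) (fun x => (h x).deriv) x y

namespace Jac
variable {k : ℝ} {s c d : ℝ → ℝ}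

theorem c2 (J : Jac k s c d) (x : ℝ) : c x ^ 2 = 1 - s x ^ 2 := by
  have h : ∀ x, HasDerivAt (fun x => s x ^ 2 + c x ^ 2) 0 x := fun x => by
    refine (((J.hs x).pow 2).add ((J.hc x).pow 2)).congr_deriv ?_
    simp; ring
  have := const_of_hasDerivAt_zero h x 0
  simp only [J.s0, J.c0] at this
  linarith

theorem d2 (J : Jac k s c d) (x : ℝ) : d x ^ 2 = 1 - k ^ 2 * s x ^ 2 := by
  have h : ∀ x, HasDerivAt (fun x => k ^ 2 * s x ^ 2 + d x ^ 2) 0 x := fun x => by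
    refine ((((J.hs x).pow 2).const_mul (k^2)).add ((J.hd x).pow 2)).congr_deriv ?_
    simp; ring
  have := const_of_hasDerivAt_zero h x 0
  simp only [J.s0, J.d0] at this
  linarith

theorem s2_le (J : Jac k s c d) (x : ℝ) : s x ^ 2 ≤ 1 := by
  nlinarith [J.c2 x, sq_nonneg (c x)]

theorem k2_lt (J : Jac k s c d) : k ^ 2 < 1 := by nlinarith [J.k0, J.k1]

theorem den_pos (J : Jac k s c d) (x y : ℝ) : 0 < 1 - k ^ 2 * s x ^ 2 * s y ^ 2 := by
  have h1 := J.s2_le x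
  have h2 := J.s2_le y
  have h3 := J.k2_lt
  have h4 : s x ^ 2 * s y ^ 2 ≤ 1 := by nlinarith [sq_nonneg (s x), sq_nonneg (s y)]
  nlinarith [mul_nonneg (sq_nonneg (s x)) (sq_nonneg (s y)), sq_nonneg k]

theorem d_pos (J : Jac k s c d) (x : ℝ) : 0 < d x := by
  have hne : ∀ y, d y ≠ 0 := fun y h => by
    have := J.d2 y
    rw [h] at this
    nlinarith [J.s2_le y, J.k2_lt, sq_nonneg (s y), sq_nonneg k]
  have hcont : Continuous d := continuous_iff_continuousAt.2 fun x => (J.hd x).continuousAt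
  by_contra hx
  have hx' : d x < 0 := lt_of_le_of_ne (not_lt.1 hx) (hne x)
  have := mem_range_of_exists_le_of_exists_ge hcont ⟨x, hx'.le⟩ ⟨0, by rw [J.d0]; norm_num⟩
  obtain ⟨y, hy⟩ := this
  exact hne y hy

theorem cont_s (J : Jac k s c d) : Continuous s :=
  continuous_iff_continuousAt.2 fun x => (J.hs x).continuousAt
theorem cont_c (J : Jac k s c d) : Continuous c :=
  continuous_iff_continuousAt.2 fun x => (J.hc x).continuousAt
theorem cont_d (J : Jac k s c d) : Continuous d :=
  continuous_iff_continuousAt.2 fun x => (J.hd x).continuousAt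

/-- addition via constancy of a quotient -/
theorem quot_const {N M N' M' : ℝ → ℝ} (hN : ∀ x, HasDerivAt N (N' x) x)
    (hM : ∀ x, HasDerivAt M (M' x) x) (hM0 : ∀ x, M x ≠ 0)
    (h : ∀ x, N' x * M x - N x * M' x = 0) (x y : ℝ) : N x / M x = N y / M y := by
  refine const_of_hasDerivAt_zero (f := fun x => N x / M x) (fun x => ?_) x y
  refine ((hN x).div (hM x) (hM0 x)).congr_deriv ?_
  rw [h x]; simp

theorem hs' (J : Jac k s c d) (w x : ℝ) :
    HasDerivAt (fun x => s (w - x)) (-(c (w-x) * d (w-x))) x := by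
  simpa using HasDerivAt.comp_const_sub w x (J.hs (w - x))
theorem hc' (J : Jac k s c d) (w x : ℝ) :
    HasDerivAt (fun x => c (w - x)) (s (w-x) * d (w-x)) x := by
  simpa using HasDerivAt.comp_const_sub w x (J.hc (w - x))
theorem hd' (J : Jac k s c d) (w x : ℝ) :
    HasDerivAt (fun x => d (w - x)) (k^2 * s (w-x) * c (w-x)) x := by
  simpa using HasDerivAt.comp_const_sub w x (J.hd (w - x))

theorem hden (J : Jac k s c d) (w x : ℝ) :
    HasDerivAt (fun x => 1 - k^2 * s x ^ 2 * s (w - x) ^ 2)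
      (-(2 * k^2 * s x * s (w-x) * (c x * d x * s (w-x) - s x * (c (w-x) * d (w-x))))) x := by
  refine (((((J.hs x).pow 2).const_mul (k^2)).mul ((J.hs' w x).pow 2)).const_sub 1).congr_deriv ?_
  simp; ring

theorem add_s_aux (J : Jac k s c d) (w x : ℝ) :
    (s x * c (w-x) * d (w-x) + s (w-x) * c x * d x) / (1 - k^2 * s x ^ 2 * s (w - x) ^ 2) = s w := by
  have := quot_const (N := fun x => s x * c (w-x) * d (w-x) + s (w-x) * c x * d x)
    (M := fun x => 1 - k^2 * s x ^ 2 * s (w - x) ^ 2)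
    (fun x => (((J.hs x).mul (J.hc' w x)).mul (J.hd' w x)).add
      (((J.hs' w x).mul (J.hc x)).mul (J.hd x))) (J.hden w)
    (fun x => (J.den_pos x (w-x)).ne') (fun x => ?_) x 0
  · simpa [J.s0, J.c0, J.d0] using this
  · have h1 := J.c2 x
    have h2 := J.d2 x
    have h3 := J.c2 (w-x)
    have h4 := J.d2 (w-x)
    simp only [Pi.mul_apply]
    grind

theorem add_c_aux (J : Jac k s c d) (w x : ℝ) :
    (c x * c (w-x) - s x * s (w-x) * d x * d (w-x)) / (1 - k^2 * s x ^ 2 * s (w - x) ^ 2) = c w := by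
  have := quot_const (N := fun x => c x * c (w-x) - s x * s (w-x) * d x * d (w-x))
    (M := fun x => 1 - k^2 * s x ^ 2 * s (w - x) ^ 2)
    (fun x => ((J.hc x).mul (J.hc' w x)).sub
      ((((J.hs x).mul (J.hs' w x)).mul (J.hd x)).mul (J.hd' w x))) (J.hden w)
    (fun x => (J.den_pos x (w-x)).ne') (fun x => ?_) x 0
  · simpa [J.s0, J.c0, J.d0] using this
  · have h1 := J.c2 x
    have h2 := J.d2 x
    have h3 := J.c2 (w-x)
    have h4 := J.d2 (w-x)
    simp only [Pi.mul_apply]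
    grind

theorem add_d_aux (J : Jac k s c d) (w x : ℝ) :
    (d x * d (w-x) - k^2 * s x * s (w-x) * c x * c (w-x)) / (1 - k^2 * s x ^ 2 * s (w - x) ^ 2) = d w := by
  have := quot_const (N := fun x => d x * d (w-x) - k^2 * s x * s (w-x) * c x * c (w-x))
    (M := fun x => 1 - k^2 * s x ^ 2 * s (w - x) ^ 2)
    (fun x => ((J.hd x).mul (J.hd' w x)).sub
      (((((J.hs x).const_mul (k^2)).mul (J.hs' w x)).mul (J.hc x)).mul (J.hc' w x))) (J.hden w)
    (fun x => (J.den_pos x (w-x)).ne') (fun x => ?_) x 0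
  · simpa [J.s0, J.c0, J.d0] using this
  · have h1 := J.c2 x
    have h2 := J.d2 x
    have h3 := J.c2 (w-x)
    have h4 := J.d2 (w-x)
    simp only [Pi.mul_apply]
    grind

theorem add_s (J : Jac k s c d) (x y : ℝ) :
    s (x + y) = (s x * c y * d y + s y * c x * d x) / (1 - k^2 * s x ^ 2 * s y ^ 2) := by
  simpa using (J.add_s_aux (x+y) x).symm
theorem add_c (J : Jac k s c d) (x y : ℝ) :
    c (x + y) = (c x * c y - s x * s y * d x * d y) / (1 - k^2 * s x ^ 2 * s y ^ 2) := by
  simpa using (J.add_c_aux (x+y) x).symm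
theorem add_d (J : Jac k s c d) (x y : ℝ) :
    d (x + y) = (d x * d y - k^2 * s x * s y * c x * c y) / (1 - k^2 * s x ^ 2 * s y ^ 2) := by
  simpa using (J.add_d_aux (x+y) x).symm

end Jac
end SP1

section SP2

def Fell (k θ : ℝ) : ℝ := ∫ t in (0:ℝ)..θ, (Real.sqrt (1 - k ^ 2 * Real.sin t ^ 2))⁻¹

theorem Fell_rad_pos {k : ℝ} (h0 : 0 < k) (h1 : k < 1) (t : ℝ) : 0 < 1 - k ^ 2 * Real.sin t ^ 2 := by
  nlinarith [Real.sin_sq_le_one t, sq_nonneg (Real.sin t), sq_nonneg k]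

theorem Fell_cont {k : ℝ} (h0 : 0 < k) (h1 : k < 1) :
    Continuous fun t => (Real.sqrt (1 - k ^ 2 * Real.sin t ^ 2))⁻¹ := by
  refine Continuous.inv₀ (by fun_prop) fun t => ?_
  exact (Real.sqrt_pos.2 (Fell_rad_pos h0 h1 t)).ne'

theorem Fell_deriv {k : ℝ} (h0 : 0 < k) (h1 : k < 1) (θ : ℝ) :
    HasDerivAt (Fell k) (Real.sqrt (1 - k ^ 2 * Real.sin θ ^ 2))⁻¹ θ :=
  intervalIntegral.integral_hasDerivAt_right ((Fell_cont h0 h1).intervalIntegrable _ _)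
    ((Fell_cont h0 h1).stronglyMeasurableAtFilter _ _) (Fell_cont h0 h1).continuousAt

theorem Fell_strictMono {k : ℝ} (h0 : 0 < k) (h1 : k < 1) : StrictMono (Fell k) := by
  refine strictMono_of_deriv_pos fun θ => ?_
  rw [(Fell_deriv h0 h1 θ).deriv]
  exact inv_pos.2 (Real.sqrt_pos.2 (Fell_rad_pos h0 h1 θ))

theorem Fell_zero (k : ℝ) : Fell k 0 = 0 := by simp [Fell]

theorem Fell_pi_div_two (k : ℝ) : Fell k (Real.pi / 2) = Kcomp k := rfl

theorem Kcomp_pos {k : ℝ} (h0 : 0 < k) (h1 : k < 1) : 0 < Kcomp k := by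
  rw [← Fell_pi_div_two, ← Fell_zero k]
  exact Fell_strictMono h0 h1 (by positivity)

namespace Jac
variable {k : ℝ} {s c d : ℝ → ℝ}

theorem neg_all (J : Jac k s c d) (x : ℝ) : s (-x) = - s x ∧ c (-x) = c x ∧ d (-x) = d x := by
  have D := J.den_pos x (-x)
  have e1 := J.add_c x (-x)
  have e2 := J.add_d x (-x)
  rw [add_neg_cancel, J.c0, eq_div_iff D.ne'] at e1
  rw [add_neg_cancel, J.d0, eq_div_iff D.ne'] at e2
  have h1 := J.c2 x
  have h2 := J.d2 x
  have h3 := J.c2 (-x)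
  have h4 := J.d2 (-x)
  generalize s (-x) = S at *
  generalize c (-x) = C at *
  generalize d (-x) = D' at *
  generalize s x = s at *
  generalize c x = c at *
  generalize d x = d at *
  have X : c * C = 1 + s * S := by
    have : (c * C - (1 + s * S)) * (1 - k^2*s^2*S^2) = 0 := by linear_combination -(e1 + s * S * e2)
    rcases mul_eq_zero.1 this with h | h
    · linarith
    · exact absurd h D.ne'
  have Y : d * D' = 1 + k^2 * (s * S) := by
    have : (d * D' - (1 + k^2 * (s * S))) * (1 - k^2*s^2*S^2) = 0 := by
      linear_combination -(e2 + k^2 * s * S * e1)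
    rcases mul_eq_zero.1 this with h | h
    · linarith
    · exact absurd h D.ne'
  have hS : (S + s)^2 = 0 := by
    have : (c * C)^2 = (1 - s^2)*(1-S^2) := by rw [mul_pow, h1, h3]
    rw [X] at this
    linear_combination this
  have hS' : S = -s := by
    have := pow_eq_zero_iff (two_ne_zero) |>.1 hS
    linarith
  subst hS'
  refine ⟨rfl, ?_, ?_⟩
  · have : (C - c)^2 = 0 := by linear_combination h3 + h1 - 2 * X
    have := pow_eq_zero_iff (two_ne_zero) |>.1 this
    linarith
  · have : (D' - d)^2 = 0 := by linear_combination h4 + h2 - 2 * Y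
    have := pow_eq_zero_iff (two_ne_zero) |>.1 this
    linarith

def am (d : ℝ → ℝ) (x : ℝ) : ℝ := ∫ t in (0:ℝ)..x, d t

theorem am_deriv (J : Jac k s c d) (x : ℝ) : HasDerivAt (am d) (d x) x :=
  intervalIntegral.integral_hasDerivAt_right (J.cont_d.intervalIntegrable _ _)
    (J.cont_d.stronglyMeasurableAtFilter _ _) J.cont_d.continuousAt

theorem am_zero : am d 0 = 0 := by simp [am]

theorem am_strictMono (J : Jac k s c d) : StrictMono (am d) := by
  refine strictMono_of_deriv_pos fun θ => ?_
  rw [(J.am_deriv θ).deriv]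
  exact J.d_pos θ

theorem sin_am (J : Jac k s c d) (x : ℝ) : s x = Real.sin (am d x) ∧ c x = Real.cos (am d x) := by
  have h : ∀ x, HasDerivAt (fun x => (s x - Real.sin (am d x))^2 + (c x - Real.cos (am d x))^2) 0 x := by
    intro x
    refine ((((J.hs x).sub (J.am_deriv x).sin).pow 2).add
      (((J.hc x).sub (J.am_deriv x).cos).pow 2)).congr_deriv ?_
    simp; ring
  have := const_of_hasDerivAt_zero h x 0
  simp [am_zero, J.s0, J.c0] at this
  constructor <;> nlinarith [sq_nonneg (s x - Real.sin (am d x)), sq_nonneg (c x - Real.cos (am d x))]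

theorem d_eq_sqrt (J : Jac k s c d) (x : ℝ) : d x = Real.sqrt (1 - k^2 * Real.sin (am d x)^2) := by
  rw [← (J.sin_am x).1, ← J.d2, Real.sqrt_sq (J.d_pos x).le]

theorem Fell_am (J : Jac k s c d) (x : ℝ) : Fell k (am d x) = x := by
  have h : ∀ x, HasDerivAt (fun x => Fell k (am d x) - x) 0 x := by
    intro x
    refine (((Fell_deriv J.k0 J.k1 (am d x)).comp x (J.am_deriv x)).sub (hasDerivAt_id x)).congr_deriv ?_
    rw [← J.d_eq_sqrt, inv_mul_cancel₀ (J.d_pos x).ne', sub_self]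
  have := const_of_hasDerivAt_zero h x 0
  simp [am_zero, Fell_zero] at this
  linarith

theorem am_Fell (J : Jac k s c d) (θ : ℝ) : am d (Fell k θ) = θ :=
  (Fell_strictMono J.k0 J.k1).injective (J.Fell_am _)

theorem s_Fell (J : Jac k s c d) (θ : ℝ) : s (Fell k θ) = Real.sin θ := by
  rw [(J.sin_am _).1, J.am_Fell]

theorem am_K (J : Jac k s c d) : am d (Kcomp k) = Real.pi / 2 := J.am_Fell _

theorem am_mem (J : Jac k s c d) {x : ℝ} (hx : x ∈ Set.Ioo 0 (Kcomp k)) :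
    am d x ∈ Set.Ioo 0 (Real.pi / 2) := by
  rw [← J.am_K]
  exact ⟨by simpa [am_zero] using J.am_strictMono hx.1, J.am_strictMono hx.2⟩

theorem s_pos (J : Jac k s c d) {x : ℝ} (hx : x ∈ Set.Ioo 0 (Kcomp k)) : 0 < s x := by
  rw [(J.sin_am x).1]
  have := J.am_mem hx
  exact Real.sin_pos_of_pos_of_lt_pi this.1 (by linarith [this.2, Real.pi_pos])

theorem c_pos (J : Jac k s c d) {x : ℝ} (hx : x ∈ Set.Ioo 0 (Kcomp k)) : 0 < c x := by
  rw [(J.sin_am x).2]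
  have := J.am_mem hx
  exact Real.cos_pos_of_mem_Ioo ⟨by linarith [this.1, Real.pi_pos], this.2⟩

theorem Ecomp_eq (J : Jac k s c d) : Ecomp k = ∫ t in (0:ℝ)..Kcomp k, d t ^ 2 := by
  have hcE : Continuous fun t => Real.sqrt (1 - k ^ 2 * Real.sin t ^ 2) := by fun_prop
  have hcd : Continuous fun t => d t ^ 2 := J.cont_d.pow 2
  have h : ∀ x, HasDerivAt (fun x => (∫ t in (0:ℝ)..(am d x), Real.sqrt (1 - k ^ 2 * Real.sin t ^ 2))
      - ∫ t in (0:ℝ)..x, d t ^ 2) 0 x := by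
    intro x
    have e1 : HasDerivAt (fun θ => ∫ t in (0:ℝ)..θ, Real.sqrt (1 - k ^ 2 * Real.sin t ^ 2))
      (Real.sqrt (1 - k ^ 2 * Real.sin (am d x) ^ 2)) (am d x) :=
      intervalIntegral.integral_hasDerivAt_right (hcE.intervalIntegrable _ _)
        (hcE.stronglyMeasurableAtFilter _ _) hcE.continuousAt
    have e2 : HasDerivAt (fun x => ∫ t in (0:ℝ)..x, d t ^ 2) (d x ^ 2) x :=
      intervalIntegral.integral_hasDerivAt_right (hcd.intervalIntegrable _ _)
        (hcd.stronglyMeasurableAtFilter _ _) hcd.continuousAt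
    refine ((e1.comp x (J.am_deriv x)).sub e2).congr_deriv ?_
    rw [← J.d_eq_sqrt]; ring
  have := const_of_hasDerivAt_zero h (Kcomp k) 0
  simp only [am_zero, intervalIntegral.integral_same, J.am_K] at this
  unfold Ecomp
  linarith

theorem Z_deriv (J : Jac k s c d) (x : ℝ) :
    HasDerivAt (Zjac k d) (d x ^ 2 - Ecomp k / Kcomp k) x := by
  have hcd : Continuous fun t => d t ^ 2 := J.cont_d.pow 2
  have e2 : HasDerivAt (fun x => ∫ t in (0:ℝ)..x, d t ^ 2) (d x ^ 2) x :=
      intervalIntegral.integral_hasDerivAt_right (hcd.intervalIntegrable _ _)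
        (hcd.stronglyMeasurableAtFilter _ _) hcd.continuousAt
  refine (e2.sub ((hasDerivAt_id x).const_mul (Ecomp k / Kcomp k))).congr_deriv ?_
  simp

theorem Z_zero : Zjac k d 0 = 0 := by simp [Zjac]

theorem Z_K (J : Jac k s c d) : Zjac k d (Kcomp k) = 0 := by
  rw [Zjac, ← J.Ecomp_eq, div_mul_cancel₀ _ (Kcomp_pos J.k0 J.k1).ne', sub_self]

theorem Z_nonneg (J : Jac k s c d) {x : ℝ} (hx : x ∈ Set.Ioo 0 (Kcomp k)) : 0 ≤ Zjac k d x := by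
  by_contra hneg
  push Not at hneg
  have hc : Continuous (Zjac k d) := continuous_iff_continuousAt.2 fun x => (J.Z_deriv x).continuousAt
  obtain ⟨a, ha, ha'⟩ := exists_hasDerivAt_eq_slope (Zjac k d) _ hx.1 hc.continuousOn
    (fun x _ => J.Z_deriv x)
  obtain ⟨b, hb, hb'⟩ := exists_hasDerivAt_eq_slope (Zjac k d) _ hx.2 hc.continuousOn
    (fun x _ => J.Z_deriv x)
  rw [Z_zero, sub_zero] at ha'
  rw [J.Z_K, zero_sub] at hb'
  have h1 : Zjac k d x / (x - 0) < 0 := div_neg_of_neg_of_pos hneg (by linarith [hx.1])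
  have h2 : 0 < -Zjac k d x / (Kcomp k - x) := div_pos (by linarith) (by linarith [hx.2])
  have h3 : d a ^ 2 < d b ^ 2 := by linarith
  rw [J.d2, J.d2] at h3
  have ha0 : a ∈ Set.Ioo 0 (Kcomp k) := ⟨ha.1, ha.2.trans hx.2⟩
  have hb0 : b ∈ Set.Ioo 0 (Kcomp k) := ⟨hx.1.trans hb.1, hb.2⟩
  have h4 : s a < s b := by
    rw [(J.sin_am a).1, (J.sin_am b).1]
    have m1 := J.am_mem ha0
    have m2 := J.am_mem hb0
    exact Real.sin_lt_sin_of_lt_of_le_pi_div_two (by linarith [m1.1, Real.pi_pos]) m2.2.le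
      (J.am_strictMono (ha.2.trans hb.1))
  have := J.s_pos ha0
  have hk := J.k0
  have h5 : s a ^ 2 < s b ^ 2 := by nlinarith
  nlinarith [mul_lt_mul_of_pos_left h5 (by positivity : 0 < k^2)]

theorem Z_add (J : Jac k s c d) (x y : ℝ) :
    Zjac k d (x + y) = Zjac k d x + Zjac k d y - k^2 * s x * s y * s (x + y) := by
  have h : ∀ x, HasDerivAt (fun x => Zjac k d (x + y) -
      (Zjac k d x + Zjac k d y - k^2 * s x * s y * s (x + y))) 0 x := by
    intro x
    refine (((J.Z_deriv (x+y)).comp_add_const x y).sub (((J.Z_deriv x).add_const _).sub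
      ((((J.hs x).const_mul (k^2)).mul_const (s y)).mul ((J.hs (x+y)).comp_add_const x y)))).congr_deriv ?_
    have key : s (x+y)^2 - s x ^2 = s y * (c x * d x * s (x+y) + s x * (c (x+y) * d (x+y))) := by
      have hS := J.add_s (x+y) (-x)
      have D := J.den_pos (x+y) (-x)
      obtain ⟨n1, n2, n3⟩ := J.neg_all x
      rw [add_neg_cancel_comm, eq_div_iff D.ne', n1, n2, n3] at hS
      rw [n1] at D
      have h1 := J.c2 x
      have h2 := J.d2 x
      have h3 := J.c2 (x+y)
      have h4 := J.d2 (x+y)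
      have : (s (x+y)^2 - s x ^2 - s y * (c x * d x * s (x+y) + s x * (c (x+y) * d (x+y)))) *
        (1 - k ^ 2 * s (x + y) ^ 2 * (-s x) ^ 2) = 0 := by
        generalize s (x+y) = S at *
        generalize c (x+y) = C at *
        generalize d (x+y) = E at *
        generalize s x = s at *
        generalize c x = c at *
        generalize d x = d at *
        have : c^2*d^2 = (1-s^2)*(1-k^2*s^2) := by rw [h1, h2]
        have : C^2*E^2 = (1-S^2)*(1-k^2*S^2) := by rw [h3, h4]
        grind
      rcases mul_eq_zero.1 this with h | h
      · linarith
      · exact absurd h D.ne'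
    simp only [J.d2]
    linear_combination (-k^2) * key
  have := const_of_hasDerivAt_zero h x 0
  simp [J.s0, Z_zero] at this
  linarith

theorem Z_neg (J : Jac k s c d) (x : ℝ) : Zjac k d (-x) = - Zjac k d x := by
  have := J.Z_add x (-x)
  simp [J.s0, Z_zero] at this
  linarith

theorem kap_pos (J : Jac k s c d) {x : ℝ} (hx : x ∈ Set.Ioo 0 (Kcomp k)) :
    0 < kapWidth k s c d x := by
  have := J.Z_nonneg hx
  have := J.s_pos hx
  have := J.c_pos hx
  have := J.d_pos x
  have := J.k0
  unfold kapWidth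
  positivity

end Jac
end SP2

section SP3

theorem alg_B1 (k p s G H r N M D si sj : ℝ) (hN : N = 1 - k^2*p^2*s^2) (hN0 : N ≠ 0)
    (hM : M = 1 + k * s^2) (hM0 : M ≠ 0)
    (hG : G^2 = (1-s^2)*(1-k^2*s^2)) (hH : H^2 = (1-p^2)*(1-k^2*p^2))
    (hsi : si = (p*G + s*H)/N) (hsj : sj = (p*G - s*H)/N)
    (hD : D = -2*k*s*G*(1+k*p^2)/(M*N)) (hr : r = 1 - 2*(1+k)^2*s^2/M^2) :
    D^2 - k^2*(si^2+sj^2) + 2*k^2*r*si*sj = 0 := by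
  subst hsi hsj hD hr
  have e : (-2*k*s*G*(1+k*p^2)/(M*N))^2 = 4*k^2*s^2*G^2*(1+k*p^2)^2/(M*N)^2 := by ring
  have e2 : ((p*G + s*H)/N)^2 + ((p*G - s*H)/N)^2 = 2*(p^2*G^2+s^2*H^2)/N^2 := by ring
  have e3 : 2*k^2*(1 - 2*(1+k)^2*s^2/M^2)*((p*G + s*H)/N)*((p*G - s*H)/N)
    = 2*k^2*(1 - 2*(1+k)^2*s^2/M^2)*(p^2*G^2-s^2*H^2)/N^2 := by ring
  rw [e, e2, e3, hG, hH]
  field_simp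
  subst hN hM
  ring

theorem alg_S (k p s g h N M A B C E D dm : ℝ) (hN : N = 1 - k^2*p^2*s^2) (hN0 : N ≠ 0)
    (hM : M = 1 + k * s^2) (hM0 : M ≠ 0)
    (hG : g = (1-s^2)*(1-k^2*s^2)) (hH : h = (1-p^2)*(1-k^2*p^2))
    (hA : A = p/N) (hB : B = s/N) (hC : C = (1+k^2*p^2*s^2)/N^2)
    (hE : E = s*p*((-(1+k^2)+2*k^2*p^2)*N+2*k^2*s^2*((1-p^2)*(1-k^2*p^2)))/N^2)
    (hD : D = -2*k*s*(1+k*p^2)/(M*N)) (hdm : dm = -4*k*(1+k)^2*(1-k*s^2)*s/M^3) :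
    C*(3*(D^2*g)-4*k^2*(B^2*h))+8*k^2*E*A*B+D*B*(D^2*g-2*(1+k^2)+12*k^2*(A^2*g))+dm*B = 0 := by
  subst hA hB hC hE hD hdm
  field_simp
  subst hN hM hG hH
  ring

theorem alg_O (k p s g h N M A B C E D dm : ℝ) (hN : N = 1 - k^2*p^2*s^2) (hN0 : N ≠ 0)
    (hM : M = 1 + k * s^2) (hM0 : M ≠ 0)
    (hG : g = (1-s^2)*(1-k^2*s^2)) (hH : h = (1-p^2)*(1-k^2*p^2))
    (hA : A = p/N) (hB : B = s/N) (hC : C = (1+k^2*p^2*s^2)/N^2)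
    (hE : E = s*p*((-(1+k^2)+2*k^2*p^2)*N+2*k^2*s^2*((1-p^2)*(1-k^2*p^2)))/N^2)
    (hD : D = -2*k*s*(1+k*p^2)/(M*N)) (hdm : dm = -4*k*(1+k)^2*(1-k*s^2)*s/M^3) :
    8*k^2*A*B*C*h + E*(3*D^2-4*k^2*A^2) + D*A*(D^2*g-2*(1+k^2)+12*k^2*(B^2*h))+dm*A = 0 := by
  subst hA hB hC hE hD hdm
  field_simp
  subst hN hM hG hH
  ring

theorem alg_B2 (k p s G H r N M D si sj ti tj dm : ℝ) (hN : N = 1 - k^2*p^2*s^2) (hN0 : N ≠ 0)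
    (hM : M = 1 + k * s^2) (hM0 : M ≠ 0)
    (hG : G^2 = (1-s^2)*(1-k^2*s^2)) (hH : H^2 = (1-p^2)*(1-k^2*p^2))
    (hsi : si = (p*G + s*H)/N) (hsj : sj = (p*G - s*H)/N)
    (hti : ti = (H*G*(1+k^2*p^2*s^2) + s*p*((-(1+k^2)+2*k^2*p^2)*N+2*k^2*s^2*((1-p^2)*(1-k^2*p^2))))/N^2)
    (htj : tj = (H*G*(1+k^2*p^2*s^2) - s*p*((-(1+k^2)+2*k^2*p^2)*N+2*k^2*s^2*((1-p^2)*(1-k^2*p^2))))/N^2)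
    (hD : D = -2*k*s*G*(1+k*p^2)/(M*N)) 
    (hdm : dm = -4*k*(1+k)^2*(1-k*s^2)*s*G/M^3) :
    (ti*(3*D^2+3*k^2*(si^2-sj^2)-2*k^2*si^2)+2*k^2*si*sj*tj + D*si*(D^2-2*(1+k^2)+3*k^2*(si^2-sj^2)) + dm*si)
    + r * (tj*(3*D^2+3*k^2*(sj^2-si^2)-2*k^2*sj^2)+2*k^2*si*sj*ti - D*sj*(D^2-2*(1+k^2)+3*k^2*(sj^2-si^2)) - dm*sj) = 0 := by
  have hS := alg_S k p s _ _ N M _ _ _ _ _ _ hN hN0 hM hM0 hG hH rfl rfl rfl rfl rfl rfl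
  have hO := alg_O k p s _ _ N M _ _ _ _ _ _ hN hN0 hM hM0 hG hH rfl rfl rfl rfl rfl rfl
  generalize hA : p/N = A at *
  generalize hB : s/N = B at *
  generalize hC : (1+k^2*p^2*s^2)/N^2 = C at *
  generalize hE : s*p*((-(1+k^2)+2*k^2*p^2)*N+2*k^2*s^2*((1-p^2)*(1-k^2*p^2)))/N^2 = E at *
  generalize hD' : -2*k*s*(1+k*p^2)/(M*N) = D' at *
  generalize hdm' : -4*k*(1+k)^2*(1-k*s^2)*s/M^3 = dm' at *
  have e1 : si = A*G + B*H := by rw [hsi, ← hA, ← hB]; ring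
  have e2 : sj = A*G - B*H := by rw [hsj, ← hA, ← hB]; ring
  have e3 : ti = H*G*C + E := by rw [hti, ← hC, ← hE]; ring
  have e4 : tj = H*G*C - E := by rw [htj, ← hC, ← hE]; ring
  have e5 : D = G * D' := by rw [hD, ← hD']; ring
  have e6 : dm = G * dm' := by rw [hdm, ← hdm']; ring
  clear hA hB hC hE hD' hdm' hsi hsj hti htj hD hdm
  subst e1 e2 e3 e4 e5 e6
  linear_combination (1+r)*H*G*hS + (1-r)*G^2*hO
end SP3

section SP4

theorem alg_S2 (k p S G h N A B C E D dm : ℝ) (hN : N = 1 - k^2*p^2*S^2) (hN0 : N ≠ 0)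
    (hG : G^2 = (1-S^2)*(1-k^2*S^2)) (hH : h = (1-p^2)*(1-k^2*p^2))
    (hA : A = p*G/N) (hB : B = S/N) (hC : C = G*(1+k^2*p^2*S^2)/N^2)
    (hE : E = S*p*((-(1+k^2)+2*k^2*p^2)*N+2*k^2*S^2*((1-p^2)*(1-k^2*p^2)))/N^2)
    (hD : D = -2*k*S*(1+k*p^2*G/N)) (hdm : dm = -4*k*S*(1+k^2+2*k*G-2*k^2*S^2)) :
    C*(3*D^2-4*k^2*(B^2*h))+8*k^2*E*A*B+D*B*(D^2-2*(1+k^2)+12*k^2*A^2)+dm*B = 0 := by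
  have hG3 : G^3 = (1-S^2)*(1-k^2*S^2)*G := by rw [← hG]; ring
  subst hA hB hC hE hD hdm
  field_simp
  subst hN hH
  ring_nf
  simp only [hG3]
  ring

theorem alg_B2' (k p S G H N D si sj ti tj dm : ℝ) (hN : N = 1 - k^2*p^2*S^2) (hN0 : N ≠ 0)
    (hG : G^2 = (1-S^2)*(1-k^2*S^2)) (hH : H^2 = (1-p^2)*(1-k^2*p^2))
    (hsi : si = (p*G + S*H)/N) (hsj : sj = (p*G - S*H)/N)
    (hti : ti = (H*G*(1+k^2*p^2*S^2) + S*p*((-(1+k^2)+2*k^2*p^2)*N+2*k^2*S^2*((1-p^2)*(1-k^2*p^2))))/N^2)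
    (htj : tj = (H*G*(1+k^2*p^2*S^2) - S*p*((-(1+k^2)+2*k^2*p^2)*N+2*k^2*S^2*((1-p^2)*(1-k^2*p^2))))/N^2)
    (hD : D = -2*k*S*(1+k*p^2*G/N)) (hdm : dm = -4*k*S*(1+k^2+2*k*G-2*k^2*S^2)) :
    (ti*(3*D^2+3*k^2*(si^2-sj^2)-2*k^2*si^2)+2*k^2*si*sj*tj + D*si*(D^2-2*(1+k^2)+3*k^2*(si^2-sj^2)) + dm*si)
    + (tj*(3*D^2+3*k^2*(sj^2-si^2)-2*k^2*sj^2)+2*k^2*si*sj*ti - D*sj*(D^2-2*(1+k^2)+3*k^2*(sj^2-si^2)) - dm*sj) = 0 := by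
  have hS := alg_S2 k p S G _ N _ _ _ _ D dm hN hN0 hG hH rfl rfl rfl rfl hD hdm
  generalize hA : p*G/N = A at *
  generalize hB : S/N = B at *
  generalize hC : G*(1+k^2*p^2*S^2)/N^2 = C at *
  generalize hE : S*p*((-(1+k^2)+2*k^2*p^2)*N+2*k^2*S^2*((1-p^2)*(1-k^2*p^2)))/N^2 = E at *
  have e1 : si = A + B*H := by rw [hsi, ← hA, ← hB]; ring
  have e2 : sj = A - B*H := by rw [hsj, ← hA, ← hB]; ring
  have e3 : ti = H*C + E := by rw [hti, ← hC, ← hE]; ring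
  have e4 : tj = H*C - E := by rw [htj, ← hC, ← hE]; ring
  clear hA hB hC hE hsi hsj hti htj hD hdm
  subst e1 e2 e3 e4
  linear_combination 2*H*hS

theorem alg_B1' (k p S G H N D si sj rr : ℝ) (hN : N = 1 - k^2*p^2*S^2) (hN0 : N ≠ 0)
    (hG : G^2 = (1-S^2)*(1-k^2*S^2)) (hH : H^2 = (1-p^2)*(1-k^2*p^2))
    (hsi : si = (p*G + S*H)/N) (hsj : sj = (p*G - S*H)/N)
    (hD : D = -2*k*S*(1+k*p^2*G/N)) (hr : rr = - S^2*(1+k^2+2*k*G-2*k^2*S^2)) :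
    N*(D^2 - k^2*(si^2+sj^2) + 2*k^2*si*sj) + 4*k^2*p^2*rr = 0 := by
  have e : D^2 - k^2*(si^2+sj^2) + 2*k^2*si*sj = D^2 - 4*k^2*S^2*H^2/N^2 := by
    rw [hsi, hsj]; field_simp; ring
  rw [e, hH, hD, hr]
  have e : (-2*k*S*(1+k*p^2*G/N))^2 = 4*k^2*S^2*(1 + 2*k*p^2*G/N + k^2*p^4*G^2/N^2) := by
    ring
  rw [e, hG]
  field_simp
  subst hN
  ring

/-- half of pair sum -/
def halfP (k si sj ti tj D dm : ℝ) : ℝ :=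
  ti*(3*D^2+3*k^2*(si^2-sj^2)-2*k^2*si^2)+2*k^2*si*sj*tj + D*si*(D^2-2*(1+k^2)+3*k^2*(si^2-sj^2)) + dm*si

namespace Jac
variable {k : ℝ} {s c d : ℝ → ℝ}

theorem GG (J : Jac k s c d) (x : ℝ) : (c x * d x)^2 = (1 - s x^2)*(1-k^2*s x^2) := by
  rw [mul_pow, J.c2, J.d2]

theorem add_s' (J : Jac k s c d) (X a : ℝ) :
    s (X + a) = (s X * (c a * d a) + s a * (c X * d X)) / (1 - k^2 * s X^2 * s a^2) := by
  rw [J.add_s]; ring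
theorem sub_s' (J : Jac k s c d) (X a : ℝ) :
    s (X - a) = (s X * (c a * d a) - s a * (c X * d X)) / (1 - k^2 * s X^2 * s a^2) := by
  obtain ⟨h1, h2, h3⟩ := J.neg_all a
  rw [sub_eq_add_neg, J.add_s, h1, h2, h3]; ring
theorem add_t (J : Jac k s c d) (X a : ℝ) :
    c (X + a) * d (X + a) = ((c X * d X)*(c a * d a)*(1+k^2*s X^2*s a^2) + s a*s X*((-(1+k^2)+2*k^2*s X^2)*(1 - k^2 * s X^2 * s a^2)+2*k^2*s a^2*((1-s X^2)*(1-k^2*s X^2))))/(1 - k^2 * s X^2 * s a^2)^2 := by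
  rw [J.add_c, J.add_d]
  have h := (J.den_pos X a).ne'
  have h1 := J.c2 X
  have h2 := J.c2 a
  have h3 := J.d2 X
  have h4 := J.d2 a
  rw [div_mul_div_comm, ← sq]
  congr 1
  have e : (c X * c a - s X * s a * d X * d a) * (d X * d a - k ^ 2 * s X * s a * c X * c a)
    = (c X * d X)*(c a * d a)*(1+k^2*s X^2*s a^2) - s X * s a * (d X^2 * d a^2 + k^2 * (c X^2 * c a^2)) := by ring
  rw [e, h1, h2, h3, h4]; ring
theorem sub_t (J : Jac k s c d) (X a : ℝ) :
    c (X - a) * d (X - a) = ((c X * d X)*(c a * d a)*(1+k^2*s X^2*s a^2) - s a*s X*((-(1+k^2)+2*k^2*s X^2)*(1 - k^2 * s X^2 * s a^2)+2*k^2*s a^2*((1-s X^2)*(1-k^2*s X^2))))/(1 - k^2 * s X^2 * s a^2)^2 := by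
  obtain ⟨h1, h2, h3⟩ := J.neg_all a
  rw [sub_eq_add_neg, J.add_t, h1, h2, h3]; ring
theorem Z_diff (J : Jac k s c d) (X a : ℝ) :
    Zjac k d (X + a) - Zjac k d (X - a) = 2 * Zjac k d a - 2*k^2*s X^2*s a*(c a * d a)/ (1 - k^2 * s X^2 * s a^2) := by
  obtain ⟨h1, h2, h3⟩ := J.neg_all a
  have e := J.Z_add X (-a)
  rw [← sub_eq_add_neg, J.Z_neg, h1] at e
  rw [J.Z_add, e, J.add_s', J.sub_s']
  ring

theorem M_pos (J : Jac k s c d) (a : ℝ) : 0 < 1 + k * s a^2 := by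
  have := J.k0; positivity
theorem m_pos (J : Jac k s c d) (a : ℝ) : 0 < 1 - k * s a^2 := by
  nlinarith [J.k0, J.k1, J.s2_le a, sq_nonneg (s a)]

theorem kap_c (J : Jac k s c d) {α : ℝ} (hα : α ∈ Set.Ioo 0 (Kcomp k)) :
    kapWidth k s c d α * (cSpeed k s c d α - (1 + k^2)) =
      2*k*(1+k)^2*(1-k*s α^2)*s α*(c α * d α)/(1+k*s α^2)^3 := by
  have h := (J.kap_pos hα).ne'
  have hM := (J.M_pos α).ne'
  have e : Zjac k d α * (1 + k * s α^2) + k * s α * d α * c α = kapWidth k s c d α * (1 + k * s α^2) := by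
    unfold kapWidth; field_simp
  unfold cSpeed
  rw [e]
  field_simp
  ring

/-- the pair relations with shift α -/
theorem pair1 (J : Jac k s c d) (X α : ℝ) :
    (Zjac k d (X+α) - Zjac k d (X-α) - 2 * kapWidth k s c d α)^2 - k^2*(s (X+α)^2 + s (X-α)^2)
     + 2*k^2*(1 - 2*(1+k)^2*s α^2/(1+k*s α^2)^2)*s (X+α)*s (X-α) = 0 := by
  refine alg_B1 k (s X) (s α) (c α * d α) (c X * d X) _ _ _ _ _ _ rfl (J.den_pos X α).ne' rfl
    (J.M_pos α).ne' (J.GG _) (J.GG _) (J.add_s' _ _) (J.sub_s' _ _) ?_ rfl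
  rw [J.Z_diff, kapWidth]
  have h1 := (J.den_pos X α).ne'
  have h2 := (J.M_pos α).ne'
  field_simp
  ring

theorem pair2 (J : Jac k s c d) (X : ℝ) {α : ℝ} (hα : α ∈ Set.Ioo 0 (Kcomp k)) (r D dm : ℝ)
    (hD : D = Zjac k d (X+α) - Zjac k d (X-α) - 2 * kapWidth k s c d α)
    (hdm : dm = -2 * (kapWidth k s c d α * (cSpeed k s c d α - (1 + k^2)))) :
    halfP k (s (X+α)) (s (X-α)) (c (X+α) * d (X+α)) (c (X-α) * d (X-α)) D dm
    + r * halfP k (s (X-α)) (s (X+α)) (c (X-α) * d (X-α)) (c (X+α) * d (X+α)) (-D) (-dm) = 0 := by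
  have := alg_B2 k (s X) (s α) (c α * d α) (c X * d X) r _ _ D _ _ _ _ dm rfl (J.den_pos X α).ne' rfl
    (J.M_pos α).ne' (J.GG _) (J.GG _) (J.add_s' _ _) (J.sub_s' _ _) (J.add_t _ _) (J.sub_t _ _) ?_ ?_
  · unfold halfP
    linear_combination this
  · rw [hD, J.Z_diff, kapWidth]
    have h1 := (J.den_pos X α).ne'
    have h2 := (J.M_pos α).ne'
    field_simp
    ring
  · rw [hdm, J.kap_c hα]; ring

theorem dbl (J : Jac k s c d) (α : ℝ) :
    s (2*α) = 2 * s α * (c α * d α) / ((1+k*s α^2)*(1-k*s α^2)) ∧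
    (1 + k^2 + 2*k*(c (2*α) * d (2*α)) - 2*k^2*s (2*α)^2) = ((1+k)*(1-k*s α^2)/(1+k*s α^2))^2 := by
  have h1 := (J.m_pos α).ne'
  have h2 := (J.M_pos α).ne'
  have e : (1 - k^2*s α^2*s α^2) = (1+k*s α^2)*(1-k*s α^2) := by ring
  constructor
  · rw [two_mul, J.add_s, e]; ring
  · have h3 : d (2*α) + k * c (2*α) = (1+k)*(1-k*s α^2)/(1+k*s α^2) := by
      rw [two_mul, J.add_c, J.add_d, e]
      field_simp
      linear_combination (k - k^2*s α^2) * J.c2 α + (1 - k * s α^2)* J.d2 α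
    rw [← h3]
    linear_combination -k^2*J.c2 (2*α) - J.d2 (2*α)

theorem D2 (J : Jac k s c d) (X α : ℝ) :
    Zjac k d (X+2*α) - Zjac k d (X-2*α) - 4 * kapWidth k s c d α =
     -2*k*s (2*α)*(1+k*s X^2*(c (2*α) * d (2*α))/(1 - k^2 * s X^2 * s (2*α)^2)) := by
  rw [J.Z_diff]
  have e : Zjac k d (2*α) = 2 * Zjac k d α - k^2 * s α^2 * s (2*α) := by
    rw [two_mul, J.Z_add]; ring
  have h1 := (J.m_pos α).ne'
  have h2 := (J.M_pos α).ne'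
  have e2 : k * s α * c α * d α / (1 + k * s α^2) = k * (1 - k * s α^2) * s (2*α) / 2 := by
    rw [(J.dbl α).1]; field_simp
  rw [e, kapWidth, e2]
  ring

theorem pair3 (J : Jac k s c d) (X α : ℝ) :
    (1 - k^2 * s X^2 * s (2*α)^2) * ((Zjac k d (X+2*α) - Zjac k d (X-2*α) - 4 * kapWidth k s c d α)^2
     - k^2*(s (X+2*α)^2 + s (X-2*α)^2) + 2*k^2*s (X+2*α)*s (X-2*α))
     + 4 * k^2 * s X^2*((1 - 2*(1+k)^2*s α^2/(1+k*s α^2)^2)^2 - 1) = 0 := by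
  refine alg_B1' k (s X) (s (2*α)) (c (2*α) * d (2*α)) (c X * d X) _ _ _ _ _ rfl (J.den_pos X _).ne'
    (J.GG _) (J.GG _) (J.add_s' _ _) (J.sub_s' _ _) (J.D2 _ _) ?_
  rw [(J.dbl α).2, (J.dbl α).1]
  have h1 := (J.m_pos α).ne'
  have h2 := (J.M_pos α).ne'
  have e : (2 * s α * (c α * d α) / ((1+k*s α^2)*(1-k*s α^2)))^2 =
    4 * s α^2 * (c α * d α)^2 / ((1+k*s α^2)*(1-k*s α^2))^2 := by rw [div_pow]; ring_nf
  rw [neg_mul, e, J.GG]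
  field_simp
  ring

theorem pair4 (J : Jac k s c d) (X : ℝ) {α : ℝ} (hα : α ∈ Set.Ioo 0 (Kcomp k)) (D dm : ℝ)
    (hD : D = Zjac k d (X+2*α) - Zjac k d (X-2*α) - 4 * kapWidth k s c d α)
    (hdm : dm = -4 * (kapWidth k s c d α * (cSpeed k s c d α - (1 + k^2)))) :
    halfP k (s (X+2*α)) (s (X-2*α)) (c (X+2*α) * d (X+2*α)) (c (X-2*α) * d (X-2*α)) D dm
    + halfP k (s (X-2*α)) (s (X+2*α)) (c (X-2*α) * d (X-2*α)) (c (X+2*α) * d (X+2*α)) (-D) (-dm) = 0 := by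
  have := alg_B2' k (s X) (s (2*α)) (c (2*α) * d (2*α)) (c X * d X) _ D _ _ _ _ dm rfl (J.den_pos X _).ne'
    (J.GG _) (J.GG _) (J.add_s' _ _) (J.sub_s' _ _) (J.add_t _ _) (J.sub_t _ _) (by rw [hD, J.D2]) ?_
  · unfold halfP
    linear_combination this
  · rw [hdm, J.kap_c hα, (J.dbl α).2, (J.dbl α).1]
    have h1 := (J.m_pos α).ne'
    have h2 := (J.M_pos α).ne'
    field_simp
end Jac
end SP4

section SP5

structure Jet (F F1 F2 F3 Ft : ℝ × ℝ → ℝ) : Prop where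
  h1 : ∀ w : ℝ × ℝ, HasDerivAt (fun y => F (y, w.2)) (F1 w) w.1
  h2 : ∀ w : ℝ × ℝ, HasDerivAt (fun y => F1 (y, w.2)) (F2 w) w.1
  h3 : ∀ w : ℝ × ℝ, HasDerivAt (fun y => F2 (y, w.2)) (F3 w) w.1
  ht : ∀ w : ℝ × ℝ, HasDerivAt (fun y => F (w.1, y)) (Ft w) w.2

theorem Jet.add {F F1 F2 F3 Ft G G1 G2 G3 Gt : ℝ × ℝ → ℝ} (h : Jet F F1 F2 F3 Ft)
    (h' : Jet G G1 G2 G3 Gt) :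
    Jet (fun w => F w + G w) (fun w => F1 w + G1 w) (fun w => F2 w + G2 w) (fun w => F3 w + G3 w)
      (fun w => Ft w + Gt w) :=
  ⟨fun w => (h.h1 w).add (h'.h1 w), fun w => (h.h2 w).add (h'.h2 w), fun w => (h.h3 w).add (h'.h3 w),
   fun w => (h.ht w).add (h'.ht w)⟩

theorem Jet.cmul {F F1 F2 F3 Ft : ℝ × ℝ → ℝ} (h : Jet F F1 F2 F3 Ft) (a : ℝ) :
    Jet (fun w => a * F w) (fun w => a * F1 w) (fun w => a * F2 w) (fun w => a * F3 w)
      (fun w => a * Ft w) :=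
  ⟨fun w => (h.h1 w).const_mul a, fun w => (h.h2 w).const_mul a, fun w => (h.h3 w).const_mul a,
   fun w => (h.ht w).const_mul a⟩

theorem lemmaA {f f1 f2 f3 ft g g1 g2 g3 gt : ℝ × ℝ → ℝ} (hf : Jet f f1 f2 f3 ft) (hg : Jet g g1 g2 g3 gt)
    (h0 : ∀ w, f w ≠ 0) (lam : ℝ)
    (B1 : ∀ w, f w * f2 w - f1 w^2 + g w^2 = lam * f w^2)
    (B2 : ∀ w, gt w * f w - g w * ft w + (g3 w * f w - 3 * g2 w * f1 w + 3 * g1 w * f2 w - g w * f3 w)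
      - 6 * lam * (g1 w * f w - g w * f1 w) = 0) (u : ℝ × ℝ → ℝ) (hu : u = fun w => g w / f w) (w : ℝ × ℝ) :
    ut u w - 6 * u w ^ 2 * ux u w + ux (ux (ux u)) w = 0 := by
  have e1 : ux u = fun w => (g1 w * f w - g w * f1 w) / f w^2 := by
    funext w
    subst hu
    exact ((hg.h1 w).div (hf.h1 w) (h0 w)).deriv
  have et : ut u w = (gt w * f w - g w * ft w) / f w^2 := by
    subst hu
    exact ((hg.ht w).div (hf.ht w) (h0 w)).deriv
  have e2 : ux (ux u) = fun w => ((g2 w * f w - g w * f2 w) * f w - 2 * f1 w * (g1 w * f w - g w * f1 w)) / f w^3 := by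
    rw [e1]
    funext w
    have := (((hg.h2 w).mul (hf.h1 w)).sub ((hg.h1 w).mul (hf.h2 w))).div ((hf.h1 w).pow 2) (pow_ne_zero 2 (h0 w))
    refine this.deriv.trans ?_
    have := h0 w
    simp
    field_simp
    ring
  have e3 : ux (ux (ux u)) w = (((g3 w * f w + g2 w * f1 w - g1 w * f2 w - g w * f3 w) * f w + (g2 w * f w - g w * f2 w) * f1 w
      - 2 * f2 w * (g1 w * f w - g w * f1 w) - 2 * f1 w * (g2 w * f w - g w * f2 w)) * f w - 3 * f1 w * ((g2 w * f w - g w * f2 w) * f w - 2 * f1 w * (g1 w * f w - g w * f1 w))) / f w^4 := by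
    rw [e2]
    have := (((((hg.h3 w).mul (hf.h1 w)).sub ((hg.h1 w).mul (hf.h3 w))).mul (hf.h1 w)).sub
     (((hf.h2 w).const_mul 2).mul (((hg.h2 w).mul (hf.h1 w)).sub ((hg.h1 w).mul (hf.h2 w))))).div ((hf.h1 w).pow 3) (pow_ne_zero 3 (h0 w))
    refine this.deriv.trans ?_
    have := h0 w
    simp
    field_simp
    ring
  rw [e3, et, e1, hu]
  have := h0 w
  field_simp
  linear_combination f w^2 * B2 w - 6 * (g1 w * f w - g w * f1 w) * B1 w

section
variable {k : ℝ} {s c d : ℝ → ℝ} {Th : ℝ → ℝ}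

/-- exponential-theta building block -/
def TT (k : ℝ) (Th : ℝ → ℝ) (σ m v x₀ : ℝ) (w : ℝ × ℝ) : ℝ :=
  Th (xiVar k w + σ) * Real.exp (m * (w.1 + v * w.2 + x₀))

def LL (k : ℝ) (d : ℝ → ℝ) (σ m : ℝ) (w : ℝ × ℝ) : ℝ := Zjac k d (xiVar k w + σ) + m
def zz (k : ℝ) (d : ℝ → ℝ) (σ : ℝ) (w : ℝ × ℝ) : ℝ := d (xiVar k w + σ)^2 - Ecomp k / Kcomp k

theorem xi_x {φ : ℝ → ℝ} {φ' : ℝ} {σ : ℝ} (w : ℝ × ℝ) (h : HasDerivAt φ φ' (xiVar k w + σ)) :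
    HasDerivAt (fun y => φ (xiVar k (y, w.2) + σ)) φ' w.1 := by
  have h2 : HasDerivAt (fun y => xiVar k (y, w.2) + σ) 1 w.1 := by
    unfold xiVar
    have := ((hasDerivAt_id' w.1).add_const ((1 + k^2) * w.2)).add_const σ
    simpa using this
  have := HasDerivAt.comp w.1 (h₂ := φ) h h2
  rw [mul_one] at this
  exact this
theorem xi_t {φ : ℝ → ℝ} {φ' : ℝ} {σ : ℝ} (w : ℝ × ℝ) (h : HasDerivAt φ φ' (xiVar k w + σ)) :
    HasDerivAt (fun y => φ (xiVar k (w.1, y) + σ)) (φ' * (1 + k^2)) w.2 := by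
  have h2 : HasDerivAt (fun y => xiVar k (w.1, y) + σ) (1 + k^2) w.2 := by
    unfold xiVar
    have := ((((hasDerivAt_id' w.2).const_mul (1+k^2)).const_add w.1).add_const σ)
    simpa using this
  exact HasDerivAt.comp w.2 (h₂ := φ) h h2

theorem TT_x (hT : ∀ x, HasDerivAt Th (Zjac k d x * Th x) x) (σ m v x₀ : ℝ) (w : ℝ × ℝ) :
    HasDerivAt (fun y => TT k Th σ m v x₀ (y, w.2)) (TT k Th σ m v x₀ w * LL k d σ m w) w.1 := by
  have h1 := xi_x w (hT (xiVar k w + σ))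
  have h2 : HasDerivAt (fun y => Real.exp (m * (y + v * w.2 + x₀))) (Real.exp (m * (w.1 + v * w.2 + x₀)) * m) w.1 := by
    have := ((((hasDerivAt_id' w.1).add_const (v * w.2)).add_const x₀).const_mul m).exp
    simpa using this
  refine (h1.mul h2).congr_deriv ?_
  simp only [TT, LL]; ring

theorem TT_t (hT : ∀ x, HasDerivAt Th (Zjac k d x * Th x) x) (σ m v x₀ : ℝ) (w : ℝ × ℝ) :
    HasDerivAt (fun y => TT k Th σ m v x₀ (w.1, y)) (TT k Th σ m v x₀ w * ((1+k^2) * Zjac k d (xiVar k w + σ) + m * v)) w.2 := by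
  have h1 := xi_t w (hT (xiVar k w + σ))
  have h2 : HasDerivAt (fun y => Real.exp (m * (w.1 + v * y + x₀))) (Real.exp (m * (w.1 + v * w.2 + x₀)) * (m * v)) w.2 := by
    have := (((((hasDerivAt_id' w.2).const_mul v).const_add w.1).add_const x₀).const_mul m).exp
    simpa using this
  refine (h1.mul h2).congr_deriv ?_
  simp only [TT]; ring

theorem LL_x (J : Jac k s c d) (σ m : ℝ) (w : ℝ × ℝ) :
    HasDerivAt (fun y => LL k d σ m (y, w.2)) (zz k d σ w) w.1 :=
  (xi_x w (J.Z_deriv (xiVar k w + σ))).add_const m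

theorem zz_x (J : Jac k s c d) (σ : ℝ) (w : ℝ × ℝ) :
    HasDerivAt (fun y => zz k d σ (y, w.2)) (-2*k^2*s (xiVar k w + σ) * (c (xiVar k w + σ) * d (xiVar k w + σ))) w.1 := by
  refine (((xi_x w (J.hd (xiVar k w + σ))).pow 2).sub_const _).congr_deriv ?_
  simp; ring

theorem TT_jet (J : Jac k s c d) (hT : ∀ x, HasDerivAt Th (Zjac k d x * Th x) x) (σ m v x₀ : ℝ) :
    Jet (TT k Th σ m v x₀) (fun w => TT k Th σ m v x₀ w * LL k d σ m w)
     (fun w => TT k Th σ m v x₀ w * (LL k d σ m w^2 + zz k d σ w))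
     (fun w => TT k Th σ m v x₀ w * (LL k d σ m w^3 + 3 * LL k d σ m w * zz k d σ w
        -2*k^2*s (xiVar k w + σ) * (c (xiVar k w + σ) * d (xiVar k w + σ))))
     (fun w => TT k Th σ m v x₀ w * ((1+k^2) * Zjac k d (xiVar k w + σ) + m * v)) := by
  refine ⟨TT_x hT σ m v x₀, fun w => ?_, fun w => ?_, TT_t hT σ m v x₀⟩
  · refine ((TT_x hT σ m v x₀ w).mul (LL_x J σ m w)).congr_deriv ?_
    ring
  · refine ((TT_x hT σ m v x₀ w).mul (((LL_x J σ m w).pow 2).add (zz_x J σ w))).congr_deriv ?_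
    simp
    ring

theorem s1_deriv (J : Jac k s c d) (x : ℝ) :
    HasDerivAt (fun x => c x * d x) (-(1+k^2)*s x + 2*k^2*s x^3) x := by
  refine ((J.hc x).mul (J.hd x)).congr_deriv ?_
  linear_combination -s x * J.d2 x - k^2 * s x * J.c2 x

theorem sT_jet (J : Jac k s c d) (hT : ∀ x, HasDerivAt Th (Zjac k d x * Th x) x) (σ m v x₀ : ℝ) :
    Jet (fun w => TT k Th σ m v x₀ w * s (xiVar k w + σ))
     (fun w => TT k Th σ m v x₀ w * (s (xiVar k w + σ) * LL k d σ m w + (c (xiVar k w + σ) * d (xiVar k w + σ))))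
     (fun w => TT k Th σ m v x₀ w * (s (xiVar k w + σ) * (LL k d σ m w^2 + zz k d σ w)
        + 2 * (c (xiVar k w + σ) * d (xiVar k w + σ)) * LL k d σ m w
        + (-(1+k^2)*s (xiVar k w + σ) + 2*k^2*s (xiVar k w + σ)^3)))
     (fun w => TT k Th σ m v x₀ w * (s (xiVar k w + σ) * (LL k d σ m w^3 + 3 * LL k d σ m w * zz k d σ w
        -2*k^2*s (xiVar k w + σ) * (c (xiVar k w + σ) * d (xiVar k w + σ)))
        + 3 * (c (xiVar k w + σ) * d (xiVar k w + σ)) * (LL k d σ m w^2 + zz k d σ w)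
        + 3 * (-(1+k^2)*s (xiVar k w + σ) + 2*k^2*s (xiVar k w + σ)^3) * LL k d σ m w
        + (-(1+k^2)+6*k^2*s (xiVar k w + σ)^2)*(c (xiVar k w + σ) * d (xiVar k w + σ))))
     (fun w => TT k Th σ m v x₀ w * (s (xiVar k w + σ) * ((1+k^2) * Zjac k d (xiVar k w + σ) + m * v)
        + (1+k^2) * (c (xiVar k w + σ) * d (xiVar k w + σ)))) := by
  refine ⟨fun w => ?_, fun w => ?_, fun w => ?_, fun w => ?_⟩
  · refine ((TT_x hT σ m v x₀ w).mul (xi_x w (J.hs (xiVar k w + σ)))).congr_deriv ?_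
    ring
  · refine ((TT_x hT σ m v x₀ w).mul (((xi_x w (J.hs (xiVar k w + σ))).mul (LL_x J σ m w)).add
      (xi_x w (s1_deriv J (xiVar k w + σ))))).congr_deriv ?_
    simp
    ring
  · refine ((TT_x hT σ m v x₀ w).mul ((((xi_x w (J.hs (xiVar k w + σ))).mul (((LL_x J σ m w).pow 2).add (zz_x J σ w))).add
      (((xi_x w (s1_deriv J (xiVar k w + σ))).const_mul 2).mul (LL_x J σ m w))).add
      (((xi_x w (J.hs (xiVar k w + σ))).const_mul (-(1+k^2))).add
       (((xi_x w (J.hs (xiVar k w + σ))).pow 3).const_mul (2*k^2))))).congr_deriv ?_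
    simp
    ring
  · refine ((TT_t hT σ m v x₀ w).mul (xi_t w (J.hs (xiVar k w + σ)))).congr_deriv ?_
    ring

end
end SP5

section SP6

theorem alg_final1 (k e lam r γ w : ℝ) (T l z s : Fin 3 → ℝ)
    (hz : ∀ i, z i = 1 - k^2 * s i^2 - e) (hlam : lam = 1 - e)
    (hw : T 0 * T 2 = γ^2 * T 1^2 * w)
    (p01 : (l 0 - l 1)^2 - k^2*(s 0^2 + s 1^2) + 2*k^2*r*s 0*s 1 = 0)
    (p12 : (l 1 - l 2)^2 - k^2*(s 1^2 + s 2^2) + 2*k^2*r*s 1*s 2 = 0)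
    (p02 : w * ((l 0 - l 2)^2 - k^2*(s 0^2 + s 2^2) + 2*k^2*s 0*s 2) + 4*k^2*s 1^2*(r^2-1) = 0) :
    (T 0 + T 2 + 2*γ*T 1) * (T 0 * (l 0^2 + z 0) + T 2 * (l 2^2 + z 2) + 2*γ*(T 1*(l 1^2+z 1)))
     - (T 0 * l 0 + T 2 * l 2 + 2*γ*(T 1*l 1))^2
     + (k * (T 0 * s 0 + T 2 * s 2 + 2*γ*r*(T 1* s 1)))^2
     = lam * (T 0 + T 2 + 2*γ*T 1)^2 := by
  rw [hz, hz, hz, hlam]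
  linear_combination 2*γ*T 0*T 1*p01 + 2*γ*T 1*T 2*p12 + γ^2*T 1^2*p02 +
    ((l 0 - l 2)^2 - k^2*(s 0^2 + s 2^2) + 2*k^2*s 0*s 2) * hw

theorem alg_expr (k e lam v si ti sj tj li lj zi zj Zi Zj mi mj : ℝ)
    (hzi : zi = 1 - k^2*si^2 - e) (hzj : zj = 1 - k^2*sj^2 - e) (hlam : lam = 1 - e)
    (hli : li = Zi + mi) (hlj : lj = Zj + mj) :
    (si*((1+k^2)*Zi+mi*v)+(1+k^2)*ti) - si*((1+k^2)*Zj+mj*v)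
    + ((si*(li^3+3*li*zi-2*k^2*si*ti) + 3*ti*(li^2+zi) + 3*(-(1+k^2)*si+2*k^2*si^3)*li + (-(1+k^2)+6*k^2*si^2)*ti)
      - 3*(si*(li^2+zi)+2*ti*li+(-(1+k^2)*si+2*k^2*si^3))*lj + 3*(si*li+ti)*(lj^2+zj) - si*(lj^3+3*lj*zj-2*k^2*sj*tj))
    - 6*lam*((si*li+ti) - si*lj) = halfP k si sj ti tj (li-lj) ((mi-mj)*(v-(1+k^2))) := by
  subst hzi hzj hlam hli hlj
  unfold halfP
  ring

theorem alg_final2 (k e lam r γ v : ℝ) (T l z s t Z m : Fin 3 → ℝ)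
    (hz : ∀ i, z i = 1 - k^2 * s i^2 - e) (hlam : lam = 1 - e) (hl : ∀ i, l i = Z i + m i)
    (p01 : halfP k (s 0) (s 1) (t 0) (t 1) (l 0 - l 1) ((m 0 - m 1)*(v-(1+k^2))) + r * halfP k (s 1) (s 0) (t 1) (t 0) (l 1 - l 0) ((m 1 - m 0)*(v-(1+k^2))) = 0)
    (p12 : r * halfP k (s 1) (s 2) (t 1) (t 2) (l 1 - l 2) ((m 1 - m 2)*(v-(1+k^2))) + halfP k (s 2) (s 1) (t 2) (t 1) (l 2 - l 1) ((m 2 - m 1)*(v-(1+k^2))) = 0)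
    (p02 : halfP k (s 0) (s 2) (t 0) (t 2) (l 0 - l 2) ((m 0 - m 2)*(v-(1+k^2))) + halfP k (s 2) (s 0) (t 2) (t 0) (l 2 - l 0) ((m 2 - m 0)*(v-(1+k^2))) = 0) :
    (k * (T 0 * (s 0*((1+k^2)*Z 0 + m 0*v) + (1+k^2)*t 0) + T 2 * (s 2*((1+k^2)*Z 2 + m 2*v) + (1+k^2)*t 2) + 2*γ*r*(T 1*(s 1*((1+k^2)*Z 1 + m 1*v) + (1+k^2)*t 1)))) * (T 0 + T 2 + 2*γ*T 1) - (k * (T 0 * s 0 + T 2 * s 2 + 2*γ*r*(T 1* s 1))) * (T 0 * ((1+k^2)*Z 0 + m 0*v) + T 2 * ((1+k^2)*Z 2 + m 2*v) + 2*γ*(T 1*((1+k^2)*Z 1 + m 1*v)))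
    + ((k * (T 0 * (s 0*(l 0^3 + 3*l 0*z 0 - 2*k^2*s 0*t 0) + 3*t 0*(l 0^2+z 0) + 3*(-(1+k^2)*s 0+2*k^2*s 0^3)*l 0 + (-(1+k^2)+6*k^2*s 0^2)*t 0) + T 2 * (s 2*(l 2^3 + 3*l 2*z 2 - 2*k^2*s 2*t 2) + 3*t 2*(l 2^2+z 2) + 3*(-(1+k^2)*s 2+2*k^2*s 2^3)*l 2 + (-(1+k^2)+6*k^2*s 2^2)*t 2) + 2*γ*r*(T 1*(s 1*(l 1^3 + 3*l 1*z 1 - 2*k^2*s 1*t 1) + 3*t 1*(l 1^2+z 1) + 3*(-(1+k^2)*s 1+2*k^2*s 1^3)*l 1 + (-(1+k^2)+6*k^2*s 1^2)*t 1)))) * (T 0 + T 2 + 2*γ*T 1)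
      - 3 * (k * (T 0 * (s 0*(l 0^2 + z 0) + 2*t 0*l 0 + (-(1+k^2)*s 0+2*k^2*s 0^3)) + T 2 * (s 2*(l 2^2 + z 2) + 2*t 2*l 2 + (-(1+k^2)*s 2+2*k^2*s 2^3)) + 2*γ*r*(T 1*(s 1*(l 1^2 + z 1) + 2*t 1*l 1 + (-(1+k^2)*s 1+2*k^2*s 1^3))))) * (T 0 * l 0 + T 2 * l 2 + 2*γ*(T 1*l 1))
      + 3 * (k * (T 0 * (s 0*l 0 + t 0) + T 2 * (s 2*l 2 + t 2) + 2*γ*r*(T 1*(s 1*l 1 + t 1)))) * (T 0 * (l 0^2 + z 0) + T 2 * (l 2^2 + z 2) + 2*γ*(T 1*(l 1^2 + z 1)))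
      - (k * (T 0 * s 0 + T 2 * s 2 + 2*γ*r*(T 1* s 1))) * (T 0 * (l 0^3 + 3*l 0*z 0 - 2*k^2*s 0*t 0) + T 2 * (l 2^3 + 3*l 2*z 2 - 2*k^2*s 2*t 2) + 2*γ*(T 1*(l 1^3 + 3*l 1*z 1 - 2*k^2*s 1*t 1))))
    - 6 * lam * ((k * (T 0 * (s 0*l 0 + t 0) + T 2 * (s 2*l 2 + t 2) + 2*γ*r*(T 1*(s 1*l 1 + t 1)))) * (T 0 + T 2 + 2*γ*T 1) - (k * (T 0 * s 0 + T 2 * s 2 + 2*γ*r*(T 1* s 1))) * (T 0 * l 0 + T 2 * l 2 + 2*γ*(T 1*l 1))) = 0 := by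
  have E := fun i j => alg_expr k e lam v (s i) (t i) (s j) (t j) (l i) (l j) (z i) (z j) (Z i) (Z j) (m i) (m j)
    (hz i) (hz j) hlam (hl i) (hl j)
  have D : ∀ i, halfP k (s i) (s i) (t i) (t i) (l i - l i) ((m i - m i)*(v-(1+k^2))) = 0 := fun i => by unfold halfP; ring
  linear_combination k*1*(1)*1*T 0*T 0*E 0 0 + k*1*(2*γ)*1*T 0*T 1*E 0 1 + k*1*(1)*1*T 0*T 2*E 0 2 + k*2*γ*(1)*r*T 1*T 0*E 1 0 + k*2*γ*(2*γ)*r*T 1*T 1*E 1 1 + k*2*γ*(1)*r*T 1*T 2*E 1 2 + k*1*(1)*1*T 2*T 0*E 2 0 + k*1*(2*γ)*1*T 2*T 1*E 2 1 + k*1*(1)*1*T 2*T 2*E 2 2 + k*T 0*T 0*D 0 + k*4*γ^2*r*T 1*T 1*D 1 + k*T 2*T 2*D 2 + k*2*γ*T 0*T 1*p01 + k*2*γ*T 1*T 2*p12 + k*T 0*T 2*p02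

theorem breather_core {k : ℝ} {s c d Th : ℝ → ℝ} (J : Jac k s c d)
    (hT : ∀ x, HasDerivAt Th (Zjac k d x * Th x) x) (hpos : ∀ x, 0 < Th x)
    (hprod : ∀ x y, Th (x+y) * Th (x-y) * Th 0^2 = Th x^2 * Th y^2 * (1 - k^2 * s x^2 * s y^2))
    {α : ℝ} (hα : α ∈ Set.Ioo 0 (Kcomp k)) (x₀ κ v γ r : ℝ) (hκ : κ = kapWidth k s c d α)
    (hv : v = cSpeed k s c d α) (hγ : γ = Th (2*α) / Th 0)
    (hr : r = 1 - 2*(1+k)^2*s α^2/(1+k*s α^2)^2) (u : ℝ × ℝ → ℝ)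
    (hu : u = fun w => (k * (TT k Th (2*α) (-2*κ) v x₀ w * s (xiVar k w + 2*α)
      + TT k Th (-(2*α)) (2*κ) v x₀ w * s (xiVar k w + -(2*α))
      + 2*γ*r*(TT k Th 0 0 v x₀ w * s (xiVar k w + 0)))) /
      (TT k Th (2*α) (-2*κ) v x₀ w + TT k Th (-(2*α)) (2*κ) v x₀ w + 2*γ*(TT k Th 0 0 v x₀ w))) (w : ℝ × ℝ) :
    ut u w - 6 * u w ^ 2 * ux u w + ux (ux (ux u)) w = 0 := by
  have hγ0 : 0 < γ := hγ ▸ div_pos (hpos _) (hpos _)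
  have hTT : ∀ σ m w, 0 < TT k Th σ m v x₀ w := fun σ m w => mul_pos (hpos _) (Real.exp_pos _)
  have hzz : ∀ σ w, zz k d σ w = 1 - k^2 * s (xiVar k w + σ)^2 - Ecomp k / Kcomp k := fun σ w => by
    rw [zz, J.d2]
  have P1 : ∀ σ w, c (xiVar k w + σ) * d (xiVar k w + σ) = (fun x => c x * d x) (xiVar k w + σ) := fun _ _ => rfl
  refine lemmaA
    (((TT_jet J hT (2*α) (-2*κ) v x₀).add (TT_jet J hT (-(2*α)) (2*κ) v x₀)).add ((TT_jet J hT 0 0 v x₀).cmul (2*γ)))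
    ((((sT_jet J hT (2*α) (-2*κ) v x₀).add (sT_jet J hT (-(2*α)) (2*κ) v x₀)).add ((sT_jet J hT 0 0 v x₀).cmul (2*γ*r))).cmul k)
    (fun w => ?_) (1 - Ecomp k / Kcomp k) (fun w => ?_) (fun w => ?_) u hu w
  · have h1 := hTT (2*α) (-2*κ) w
    have h2 := hTT (-(2*α)) (2*κ) w
    have h3 := hTT 0 0 w
    positivity
  · have q1 := J.pair1 (xiVar k w + α) α
    have q2 := J.pair1 (xiVar k w - α) α
    have q3 := J.pair3 (xiVar k w) α
    rw [show xiVar k w + α + α = xiVar k w + 2*α by ring, show xiVar k w + α - α = xiVar k w by ring] at q1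
    rw [show xiVar k w - α + α = xiVar k w by ring, show xiVar k w - α - α = xiVar k w - 2*α by ring] at q2
    refine alg_final1 k (Ecomp k / Kcomp k) _ r γ (1 - k^2 * s (xiVar k w)^2 * s (2*α)^2)
      ![TT k Th (2*α) (-2*κ) v x₀ w, TT k Th 0 0 v x₀ w, TT k Th (-(2*α)) (2*κ) v x₀ w]
      ![LL k d (2*α) (-2*κ) w, LL k d 0 0 w, LL k d (-(2*α)) (2*κ) w]
      ![zz k d (2*α) w, zz k d 0 w, zz k d (-(2*α)) w]
      ![s (xiVar k w + 2*α), s (xiVar k w + 0), s (xiVar k w + -(2*α))] ?_ rfl ?_ ?_ ?_ ?_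
    · intro i
      fin_cases i
      · exact hzz _ _
      · exact hzz _ _
      · exact hzz _ _
    · show TT k Th (2*α) (-2*κ) v x₀ w * TT k Th (-(2*α)) (2*κ) v x₀ w = γ^2 * TT k Th 0 0 v x₀ w^2 * _
      have h0 := (hpos 0).ne'
      have := hprod (xiVar k w) (2*α)
      rw [sub_eq_add_neg] at this
      have e1 : Real.exp (-2*κ * (w.1 + v * w.2 + x₀)) * Real.exp (2*κ * (w.1 + v * w.2 + x₀)) = 1 := by
        rw [← Real.exp_add]; simp
      rw [TT, TT, TT, hγ]
      simp only [add_zero, zero_mul, Real.exp_zero, mul_one]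
      rw [← sub_eq_add_neg] at this ⊢
      rw [mul_mul_mul_comm, e1, mul_one, div_pow, div_mul_eq_mul_div, div_mul_eq_mul_div, eq_div_iff (pow_ne_zero 2 h0), this]
      ring
    · simp only [LL, Matrix.cons_val_zero, Matrix.cons_val_one, add_zero, hκ, hr]
      linear_combination q1
    · simp only [LL, Matrix.cons_val_zero, Matrix.cons_val_one, Matrix.cons_val, add_zero, hκ, hr, ← sub_eq_add_neg]
      linear_combination q2
    · simp only [LL, Matrix.cons_val_zero, Matrix.cons_val_one, Matrix.cons_val, add_zero, hκ, hr, ← sub_eq_add_neg]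
      linear_combination q3
  · refine alg_final2 k (Ecomp k / Kcomp k) _ r γ v
      ![TT k Th (2*α) (-2*κ) v x₀ w, TT k Th 0 0 v x₀ w, TT k Th (-(2*α)) (2*κ) v x₀ w]
      ![LL k d (2*α) (-2*κ) w, LL k d 0 0 w, LL k d (-(2*α)) (2*κ) w]
      ![zz k d (2*α) w, zz k d 0 w, zz k d (-(2*α)) w]
      ![s (xiVar k w + 2*α), s (xiVar k w + 0), s (xiVar k w + -(2*α))]
      ![c (xiVar k w + 2*α) * d (xiVar k w + 2*α), c (xiVar k w + 0) * d (xiVar k w + 0), c (xiVar k w + -(2*α)) * d (xiVar k w + -(2*α))]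
      ![Zjac k d (xiVar k w + 2*α), Zjac k d (xiVar k w + 0), Zjac k d (xiVar k w + -(2*α))]
      ![-2*κ, 0, 2*κ] ?_ rfl ?_ ?_ ?_ ?_
    · intro i
      fin_cases i
      · exact hzz _ _
      · exact hzz _ _
      · exact hzz _ _
    · intro i
      fin_cases i <;> rfl
    · have q := J.pair2 (xiVar k w + α) hα r _ _ rfl rfl
      rw [show xiVar k w + α + α = xiVar k w + 2*α by ring, show xiVar k w + α - α = xiVar k w by ring] at q
      simp only [LL, Matrix.cons_val_zero, Matrix.cons_val_one, Matrix.cons_val, add_zero, hκ, hv]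
      unfold halfP at q ⊢
      linear_combination q
    · have q := J.pair2 (xiVar k w - α) hα 1 _ _ rfl rfl
      have q0 := J.pair2 (xiVar k w - α) hα 0 _ _ rfl rfl
      rw [show xiVar k w - α + α = xiVar k w by ring, show xiVar k w - α - α = xiVar k w - 2*α by ring] at q q0
      simp only [LL, Matrix.cons_val_zero, Matrix.cons_val_one, Matrix.cons_val, add_zero, hκ, hv, ← sub_eq_add_neg]
      unfold halfP at q q0 ⊢
      linear_combination q + (r - 1) * q0
    · have q := J.pair4 (xiVar k w) hα _ _ rfl rfl
      simp only [LL, Matrix.cons_val_zero, Matrix.cons_val_one, Matrix.cons_val, add_zero, hκ, hv, ← sub_eq_add_neg]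
      unfold halfP at q ⊢
      linear_combination q
end SP6

section SP7

theorem final_reduction {k : ℝ} {s c d : ℝ → ℝ} (J : Jac k s c d)
    (h1 : ∀ x, Hf k x = √k * (THf k x * s x))
    (hT : ∀ x, HasDerivAt (THf k) (Zjac k d x * THf k x) x) (hpos : ∀ x, 0 < THf k x)
    (hprod : ∀ x y, THf k (x+y) * THf k (x-y) * THf k 0^2 = THf k x^2 * THf k y^2 * (1 - k^2 * s x^2 * s y^2))
    (hc : ContDiff ℝ (⊤ : ℕ∞) (THf k)) (hcH : ContDiff ℝ (⊤ : ℕ∞) (Hf k))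
    {α : ℝ} (hα : α ∈ Set.Ioo 0 (Kcomp k)) (x₀ : ℝ) :
    (∀ w : ℝ × ℝ, 0 < Dden k s c d α x₀ w) ∧
    ContDiff ℝ (⊤ : ℕ∞) (uhat k s c d α x₀) ∧
    (∀ w : ℝ × ℝ,
      ut (uhat k s c d α x₀) w
      - 6 * (uhat k s c d α x₀ w) ^ 2 * ux (uhat k s c d α x₀) w
      + ux (ux (ux (uhat k s c d α x₀))) w = 0) := by
  have hγ : 0 < gammaPar k α := div_pos (hpos _) (hpos _)
  have hD : ∀ w : ℝ × ℝ, 0 < Dden k s c d α x₀ w := fun w => by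
    unfold Dden
    have a1 := hpos (xiVar k w + 2 * α)
    have a2 := hpos (xiVar k w - 2 * α)
    have a3 := hpos (xiVar k w)
    positivity
  have hxi : ContDiff ℝ (⊤ : ℕ∞) (fun w : ℝ × ℝ => xiVar k w) := by unfold xiVar; fun_prop
  have heta : ContDiff ℝ (⊤ : ℕ∞) (fun w : ℝ × ℝ => etaVar k s c d α x₀ w) := by unfold etaVar; fun_prop
  refine ⟨hD, ?_, ?_⟩
  · unfold uhat
    refine ContDiff.div ?_ ?_ (fun w => (hD w).ne')
    · refine contDiff_const.mul (((ContDiff.mul (hcH.comp (hxi.add contDiff_const)) ?_).add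
        (ContDiff.mul (hcH.comp (hxi.sub contDiff_const)) ?_)).add (contDiff_const.mul (hcH.comp hxi)))
      · exact (contDiff_const.mul heta).neg.exp
      · exact (contDiff_const.mul heta).exp
    · unfold Dden
      refine (((ContDiff.mul (hc.comp (hxi.add contDiff_const)) ?_).add
        (ContDiff.mul (hc.comp (hxi.sub contDiff_const)) ?_)).add (contDiff_const.mul (hc.comp hxi)))
      · exact (contDiff_const.mul heta).neg.exp
      · exact (contDiff_const.mul heta).exp
  · refine breather_core J hT hpos hprod hα x₀ _ _ _ _ rfl rfl rfl rfl _ ?_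
    funext w
    have hsK : s (Kcomp k) = 1 := by
      rw [(J.sin_am _).1, J.am_K, Real.sin_pi_div_two]
    have hK : Hf k (Kcomp k) / THf k (Kcomp k) = √k := by
      rw [h1, hsK]
      have := (hpos (Kcomp k)).ne'
      field_simp
    have hk2 : √k * √k = k := Real.mul_self_sqrt J.k0.le
    unfold uhat
    rw [hK, h1, h1, h1]
    have e1 : ∀ w, TT k (THf k) (2*α) (-2*kapWidth k s c d α) (cSpeed k s c d α) x₀ w =
      THf k (xiVar k w + 2*α) * Real.exp (-(2 * etaVar k s c d α x₀ w)) := fun w => by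
      unfold TT etaVar; congr 2; ring
    have e2 : ∀ w, TT k (THf k) (-(2*α)) (2*kapWidth k s c d α) (cSpeed k s c d α) x₀ w =
      THf k (xiVar k w - 2*α) * Real.exp (2 * etaVar k s c d α x₀ w) := fun w => by
      unfold TT etaVar; rw [← sub_eq_add_neg]; congr 2; ring
    have e3 : ∀ w, TT k (THf k) 0 0 (cSpeed k s c d α) x₀ w = THf k (xiVar k w) := fun w => by
      unfold TT; simp
    rw [e1, e2, e3, add_zero, ← sub_eq_add_neg]
    congr 1
    unfold betaPar
    linear_combination (THf k (xiVar k w + 2*α) * Real.exp (-(2 * etaVar k s c d α x₀ w)) * s (xiVar k w + 2*α)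
      + THf k (xiVar k w - 2*α) * Real.exp (2 * etaVar k s c d α x₀ w) * s (xiVar k w - 2*α)
      + 2 * ((1 - 2*(1+k)^2*s α^2/(1+k*s α^2)^2) * (THf k (2*α) / THf k 0)) * THf k (xiVar k w) * s (xiVar k w)) * hk2
end SP7

section SP8

/-- theta function with characteristic `ε` at `τ = i a` -/
def Uth (ε a : ℝ) (z : ℂ) : ℂ :=
  Complex.exp (-Real.pi * a * ε^2 + 2 * Complex.I * ε * z) *
    jacobiTheta₂ (z / Real.pi + Complex.I * a * ε) (Complex.I * a)

def Uterm (ε a : ℝ) (z : ℂ) (n : ℤ) : ℂ :=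
  Complex.exp (-Real.pi * a * ((n:ℂ)+ε)^2 + 2 * Complex.I * ((n:ℂ)+ε) * z)

theorem Uth_hasSum (ε : ℝ) {a : ℝ} (ha : 0 < a) (z : ℂ) : HasSum (Uterm ε a z) (Uth ε a z) := by
  have h := (hasSum_jacobiTheta₂_term (z / Real.pi + Complex.I * a * ε) (τ := Complex.I * a) (by simpa using ha)).mul_left
    (Complex.exp (-Real.pi * a * ε^2 + 2 * Complex.I * ε * z))
  refine h.congr_fun ?_ |> fun h => h
  intro n
  rw [Uterm, jacobiTheta₂_term, ← Complex.exp_add]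
  congr 1
  have hpi : (Real.pi : ℂ) ≠ 0 := by exact_mod_cast Real.pi_ne_zero
  field_simp
  ring_nf
  simp only [Complex.I_sq]
  ring

theorem Uth_diff (ε : ℝ) {a : ℝ} (ha : 0 < a) : Differentiable ℂ (Uth ε a) := by
  intro z
  unfold Uth
  refine DifferentiableAt.mul (by fun_prop) ?_
  have := differentiableAt_jacobiTheta₂_fst (z / Real.pi + Complex.I * a * ε) (τ := Complex.I * a) (by simpa using ha)
  exact DifferentiableAt.comp (f := fun z : ℂ => z / Real.pi + Complex.I * a * ε) (g := fun w => jacobiTheta₂ w (Complex.I * a)) z this (by fun_prop)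

/-- the parity splitting of `ℤ × ℤ` -/
def splitEquiv : (ℤ × ℤ) ⊕ (ℤ × ℤ) ≃ ℤ × ℤ where
  toFun := Sum.elim (fun p => (p.1 + p.2, p.1 - p.2)) (fun p => (p.1 + p.2 + 1, p.1 - p.2))
  invFun := fun q => if (q.1 + q.2) % 2 = 0 then Sum.inl ((q.1+q.2)/2, (q.1-q.2)/2)
    else Sum.inr ((q.1+q.2-1)/2, (q.1-q.2-1)/2)
  left_inv := by
    rintro (⟨j, l⟩ | ⟨j, l⟩)
    · have : (j + l + (j - l)) % 2 = 0 := by omega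
      simp only [Sum.elim_inl, this, if_true]
      congr 2 <;> omega
    · have : ¬ (j + l + 1 + (j - l)) % 2 = 0 := by omega
      simp only [Sum.elim_inr, this, if_false]
      congr 2 <;> omega
  right_inv := by
    rintro ⟨m, n⟩
    by_cases h : (m + n) % 2 = 0
    · simp only [h, if_true, Sum.elim_inl]
      ext <;> simp <;> omega
    · simp only [h, if_false, Sum.elim_inr]
      ext <;> simp <;> omega

theorem Uth_mul_hasSum (ε₁ ε₂ : ℝ) {a : ℝ} (ha : 0 < a) (x y : ℂ) :
    HasSum (fun p : ℤ × ℤ => Uterm ε₁ a x p.1 * Uterm ε₂ a y p.2) (Uth ε₁ a x * Uth ε₂ a y) := by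
  have h1 := Uth_hasSum ε₁ ha x
  have h2 := Uth_hasSum ε₂ ha y
  exact h1.mul h2 (summable_mul_of_summable_norm h1.summable.norm h2.summable.norm)

theorem Uth_prod (ε₁ ε₂ : ℝ) {a : ℝ} (ha : 0 < a) (x y : ℂ) :
    Uth ε₁ a (x + y) * Uth ε₂ a (x - y) =
      Uth ((ε₁+ε₂)/2) (2*a) (2*x) * Uth ((ε₁-ε₂)/2) (2*a) (2*y) +
      Uth ((ε₁+ε₂+1)/2) (2*a) (2*x) * Uth ((ε₁-ε₂+1)/2) (2*a) (2*y) := by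
  have h := Uth_mul_hasSum ε₁ ε₂ ha (x+y) (x-y)
  rw [← splitEquiv.hasSum_iff] at h
  refine h.unique (HasSum.sum ?_ ?_)
  · refine (Uth_mul_hasSum ((ε₁+ε₂)/2) ((ε₁-ε₂)/2) (a := 2*a) (by positivity) (2*x) (2*y)).congr_fun ?_ |> fun h => h
    rintro ⟨j, l⟩
    simp only [Function.comp, splitEquiv, Equiv.coe_fn_mk, Sum.elim_inl, Uterm, ← Complex.exp_add]
    congr 1
    push_cast
    ring
  · refine (Uth_mul_hasSum ((ε₁+ε₂+1)/2) ((ε₁-ε₂+1)/2) (a := 2*a) (by positivity) (2*x) (2*y)).congr_fun ?_ |> fun h => h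
    rintro ⟨j, l⟩
    simp only [Function.comp, splitEquiv, Equiv.coe_fn_mk, Sum.elim_inr, Uterm, ← Complex.exp_add]
    congr 1
    push_cast
    ring

theorem Uth_add_one (ε : ℝ) {a : ℝ} (ha : 0 < a) (z : ℂ) : Uth (ε + 1) a z = Uth ε a z := by
  have h := Uth_hasSum ε ha z
  rw [← (Equiv.addRight (1:ℤ)).hasSum_iff] at h
  refine (Uth_hasSum (ε+1) ha z).unique (h.congr_fun ?_ |> fun h => h)
  intro n
  simp only [Function.comp, Uterm, Equiv.coe_addRight]
  congr 1; push_cast; ring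

theorem Uth_neg (ε : ℝ) {a : ℝ} (ha : 0 < a) (z : ℂ) : Uth (-ε) a (-z) = Uth ε a z := by
  have h := Uth_hasSum ε ha z
  rw [← (Equiv.neg ℤ).hasSum_iff] at h
  refine (Uth_hasSum (-ε) ha (-z)).unique (h.congr_fun ?_ |> fun h => h)
  intro n
  simp only [Function.comp, Uterm, Equiv.neg_apply]
  congr 1; push_cast; ring

theorem Uth_add_pi (ε : ℝ) {a : ℝ} (ha : 0 < a) (z : ℂ) :
    Uth ε a (z + Real.pi) = Complex.exp (2 * Real.pi * Complex.I * ε) * Uth ε a z := by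
  have h := (Uth_hasSum ε ha z).mul_left (Complex.exp (2 * Real.pi * Complex.I * ε))
  refine (Uth_hasSum ε ha _).unique (h.congr_fun ?_ |> fun h => h)
  intro n
  simp only [Uterm, ← Complex.exp_add]
  rw [Complex.exp_eq_exp_iff_exists_int]
  exact ⟨n, by ring⟩

theorem Uth_conj (ε : ℝ) {a : ℝ} (ha : 0 < a) (y : ℝ) :
    (starRingEnd ℂ) (Uth ε a y) = Uth ε a (-y) := by
  have h := (Uth_hasSum ε ha y)
  have h' := (Complex.hasSum_conj'.2 h)
  refine HasSum.unique h' (Uth_hasSum ε ha _ |>.congr_fun ?_ |> fun h => h)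
  intro n
  simp [Uterm, ← Complex.exp_conj, Complex.conj_ofNat]
end SP8

section SP9

def T3 (a y : ℝ) : ℝ := (Uth 0 a y).re
def T2 (a y : ℝ) : ℝ := (Uth (1/2) a y).re
def T4 (a y : ℝ) : ℝ := T3 a (y + Real.pi/2)
def T1 (a y : ℝ) : ℝ := T2 a (y - Real.pi/2)

theorem Uth_re_contDiff (ε : ℝ) {a : ℝ} (ha : 0 < a) : ContDiff ℝ (⊤ : ℕ∞) (fun y : ℝ => (Uth ε a y).re) := by
  have h : ContDiff ℝ (⊤ : ℕ∞) (Uth ε a) := ((Uth_diff ε ha).contDiff (n := (⊤ : ℕ∞))).restrict_scalars ℝ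
  exact Complex.reCLM.contDiff.comp (h.comp Complex.ofRealCLM.contDiff)
theorem Uth_im_contDiff (ε : ℝ) {a : ℝ} (ha : 0 < a) : ContDiff ℝ (⊤ : ℕ∞) (fun y : ℝ => (Uth ε a y).im) := by
  have h : ContDiff ℝ (⊤ : ℕ∞) (Uth ε a) := ((Uth_diff ε ha).contDiff (n := (⊤ : ℕ∞))).restrict_scalars ℝ
  exact Complex.imCLM.contDiff.comp (h.comp Complex.ofRealCLM.contDiff)

variable {a : ℝ}
theorem T3_cd (ha : 0 < a) : ContDiff ℝ (⊤ : ℕ∞) (T3 a) := Uth_re_contDiff 0 ha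
theorem T2_cd (ha : 0 < a) : ContDiff ℝ (⊤ : ℕ∞) (T2 a) := Uth_re_contDiff (1/2) ha
theorem T4_cd (ha : 0 < a) : ContDiff ℝ (⊤ : ℕ∞) (T4 a) := (T3_cd ha).comp (by fun_prop)
theorem T1_cd (ha : 0 < a) : ContDiff ℝ (⊤ : ℕ∞) (T1 a) := (T2_cd ha).comp (by fun_prop)

theorem Uth0_neg (ha : 0 < a) (z : ℂ) : Uth 0 a (-z) = Uth 0 a z := by
  simpa using Uth_neg 0 ha z
theorem Uth2_neg (ha : 0 < a) (z : ℂ) : Uth (1/2) a (-z) = Uth (1/2) a z := by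
  rw [← Uth_neg _ ha, ← Uth_add_one _ ha]; norm_num

theorem T3_coe (ha : 0 < a) (y : ℝ) : (T3 a y : ℂ) = Uth 0 a y := by
  have := Uth_conj 0 ha y
  rw [Uth0_neg ha, Complex.conj_eq_iff_re] at this
  exact this
theorem T2_coe (ha : 0 < a) (y : ℝ) : (T2 a y : ℂ) = Uth (1/2) a y := by
  have := Uth_conj (1/2) ha y
  rw [Uth2_neg ha, Complex.conj_eq_iff_re] at this
  exact this

theorem T3_neg (ha : 0 < a) (y : ℝ) : T3 a (-y) = T3 a y := by
  have := Uth0_neg ha y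
  unfold T3; push_cast; rw [this]
theorem T2_neg (ha : 0 < a) (y : ℝ) : T2 a (-y) = T2 a y := by
  have := Uth2_neg ha y
  unfold T2; push_cast; rw [this]
theorem T3_add_pi (ha : 0 < a) (y : ℝ) : T3 a (y + Real.pi) = T3 a y := by
  have := Uth_add_pi 0 ha y
  unfold T3; push_cast; rw [this]; simp
theorem T2_add_pi (ha : 0 < a) (y : ℝ) : T2 a (y + Real.pi) = - T2 a y := by
  have := Uth_add_pi (1/2) ha y
  unfold T2; push_cast at *; rw [this]
  have : Complex.exp (2 * Real.pi * Complex.I * (1/2)) = -1 := by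
    rw [← Complex.exp_pi_mul_I]; congr 1; ring
  rw [this]; simp
theorem T4_neg (ha : 0 < a) (y : ℝ) : T4 a (-y) = T4 a y := by
  unfold T4
  rw [← T3_neg ha, ← T3_add_pi ha]; ring_nf
theorem T1_neg (ha : 0 < a) (y : ℝ) : T1 a (-y) = - T1 a y := by
  unfold T1
  rw [← T2_neg ha, ← T2_add_pi ha]; ring_nf

theorem T3_prod (ha : 0 < a) (x y : ℝ) :
    T3 a (x+y) * T3 a (x-y) = T3 (2*a) (2*x) * T3 (2*a) (2*y) + T2 (2*a) (2*x) * T2 (2*a) (2*y) := by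
  have ha2 : 0 < 2*a := by positivity
  have := Uth_prod 0 0 ha x y
  rw [← Complex.ofReal_inj]
  push_cast
  rw [T3_coe ha, T3_coe ha, T3_coe ha2, T3_coe ha2, T2_coe ha2, T2_coe ha2]
  push_cast
  rw [this]
  norm_num

theorem T2_prod (ha : 0 < a) (x y : ℝ) :
    T2 a (x+y) * T2 a (x-y) = T2 (2*a) (2*x) * T3 (2*a) (2*y) + T3 (2*a) (2*x) * T2 (2*a) (2*y) := by
  have ha2 : 0 < 2*a := by positivity
  have := Uth_prod (1/2) (1/2) ha x y
  rw [← Complex.ofReal_inj]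
  push_cast
  rw [T2_coe ha, T2_coe ha, T3_coe ha2, T3_coe ha2, T2_coe ha2, T2_coe ha2]
  push_cast
  rw [this]
  have e := Uth_add_one 0 ha2 (2*x)
  norm_num at e ⊢
  simp [e]

theorem T23_prod (ha : 0 < a) (x y : ℝ) :
    T2 a (x+y) * T3 a (x-y) =
     2 * ((Uth (1/4) (2*a) ((2*x : ℝ) : ℂ)).re * (Uth (1/4) (2*a) ((2*y : ℝ) : ℂ)).re - (Uth (1/4) (2*a) ((2*x : ℝ) : ℂ)).im * (Uth (1/4) (2*a) ((2*y : ℝ) : ℂ)).im) := by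
  have ha2 : 0 < 2*a := by positivity
  have := Uth_prod (1/2) 0 ha x y
  have e : ∀ z : ℝ, Uth (3/4) (2*a) z = (starRingEnd ℂ) (Uth (1/4) (2*a) z) := fun z => by
    rw [Uth_conj _ ha2, ← Uth_neg _ ha2]
    rw [← Uth_add_one (-(3/4)) ha2]; norm_num
  have ex := e (2*x)
  have ey := e (2*y)
  have h : T2 a (x+y) * T3 a (x-y) = (Uth (1/2) a (x+y) * Uth 0 a (x-y)).re := by
    have h1 := T2_coe ha (x+y)
    have h2 := T3_coe ha (x-y)
    push_cast at h1 h2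
    rw [← h1, ← h2]; simp
  rw [h, this]
  push_cast at ex ey
  norm_num [ex, ey]
  ring

/-- values at the quarter-shifted arguments -/
theorem P_shift (ha : 0 < a) (y : ℝ) :
    Uth (1/4) a ((y - Real.pi : ℝ) : ℂ) = -Complex.I * Uth (1/4) a y := by
  have := Uth_add_pi (1/4) ha ((y - Real.pi : ℝ) : ℂ)
  have e : Complex.exp (2 * Real.pi * Complex.I * ((1/4 : ℝ) : ℂ)) = Complex.I := by
    rw [show (2 * Real.pi * Complex.I * ((1/4 : ℝ) : ℂ)) = Real.pi/2*Complex.I by push_cast; ring, Complex.exp_pi_div_two_mul_I]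
  rw [e] at this
  push_cast at this ⊢
  rw [sub_add_cancel] at this
  rw [this, ← mul_assoc]; simp

theorem T14_prod (ha : 0 < a) (x y : ℝ) :
    T1 a (x+y) * T4 a (x-y) =
     2 * ((Uth (1/4) (2*a) ((2*x : ℝ) : ℂ)).re * (Uth (1/4) (2*a) ((2*y : ℝ) : ℂ)).im + (Uth (1/4) (2*a) ((2*x : ℝ) : ℂ)).im * (Uth (1/4) (2*a) ((2*y : ℝ) : ℂ)).re) := by
  have := T23_prod ha x (y - Real.pi/2)
  rw [show 2 * (y - Real.pi/2) = 2*y - Real.pi by ring, P_shift (by positivity)] at this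
  unfold T1 T4
  rw [show x + y - Real.pi/2 = x + (y - Real.pi/2) by ring, show x - y + Real.pi/2 = x - (y - Real.pi/2) by ring, this]
  simp
end SP9

section SP10
section P10
variable {a : ℝ}
open Complex in
theorem Uth_modular (ha : 0 < a) (z : ℂ) :
    Uth 0 a z = (((Real.sqrt a)⁻¹ : ℝ) : ℂ) * cexp (-z^2/(Real.pi*a)) * Uth 0 (1/a) (-I*z/a) := by
  unfold Uth
  have hpi : (Real.pi : ℂ) ≠ 0 := by exact_mod_cast Real.pi_ne_zero
  have ha' : (a : ℂ) ≠ 0 := by exact_mod_cast ha.ne'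
  have h := jacobiTheta₂_functional_equation (z/Real.pi) (I*a)
  have e1 : (-I * (I * (a:ℂ))) ^ (1/2 : ℂ) = ((Real.sqrt a : ℝ) : ℂ) := by
    rw [show -I * (I * (a:ℂ)) = (a:ℂ) by rw [← mul_assoc]; simp, Real.sqrt_eq_rpow, Complex.ofReal_cpow ha.le]
    norm_num
  rw [e1] at h
  simp only [ofReal_zero, mul_zero, add_zero, zero_mul, ne_eq, OfNat.ofNat_ne_zero, not_false_eq_true, zero_pow, Complex.exp_zero, one_mul]
  rw [h]
  congr 1
  · congr 1
    · push_cast; simp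
    · congr 1; field_simp
  · congr 1
    · field_simp; simp
    · push_cast; field_simp; simp

theorem Uth0_real_pos (ha : 0 < a) (y : ℝ) : 0 < (Uth 0 a (-Complex.I * y)).re ∧ (Uth 0 a (-Complex.I * y)).im = 0 := by
  have h := Uth_hasSum 0 ha (-Complex.I * y)
  have e : ∀ n : ℤ, Uterm 0 a (-Complex.I * y) n = ((Real.exp (-Real.pi*a*n^2 + 2*n*y) : ℝ) : ℂ) := fun n => by
    unfold Uterm; push_cast; congr 1; 
    linear_combination (-2*n*y : ℂ) * Complex.I_sq
  have h : HasSum (fun n : ℤ => ((Real.exp (-Real.pi*a*n^2 + 2*n*y) : ℝ) : ℂ)) (Uth 0 a (-Complex.I * y)) := by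
    rw [← funext e]; exact h
  have hr := Complex.hasSum_re h
  have hi := Complex.hasSum_im h
  constructor
  · simp only [Complex.ofReal_re] at hr
    rw [← hr.tsum_eq]
    exact hr.summable.tsum_pos (fun n => (Real.exp_pos _).le) 0 (Real.exp_pos _)
  · simp only [Complex.ofReal_im] at hi
    exact hi.unique hasSum_zero

theorem T3_pos (ha : 0 < a) (y : ℝ) : 0 < T3 a y := by
  unfold T3
  rw [Uth_modular ha]
  have ha' : 0 < 1/a := by positivity
  obtain ⟨h1, h2⟩ := Uth0_real_pos ha' (y/a)
  have : (-Complex.I * (y:ℂ)/a) = -Complex.I * ((y/a : ℝ) : ℂ) := by push_cast; ring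
  rw [this]
  have e : Complex.exp (-(y:ℂ)^2/(Real.pi*a)) = ((Real.exp (-y^2/(Real.pi*a)) : ℝ) : ℂ) := by push_cast; rfl
  rw [e, ← Complex.ofReal_mul, Complex.re_ofReal_mul]
  positivity
theorem T4_pos (ha : 0 < a) (y : ℝ) : 0 < T4 a y := T3_pos ha _

theorem Uth_half (ha : 0 < a) (z : ℂ) : Uth (1/2) a z =
    Complex.exp (-Real.pi*a/4 + Complex.I*z) * Uth 0 a (z + Complex.I*Real.pi*a/2) := by
  unfold Uth
  have hpi : (Real.pi : ℂ) ≠ 0 := by exact_mod_cast Real.pi_ne_zero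
  simp only [Complex.ofReal_zero, mul_zero, add_zero, zero_mul, ne_eq, OfNat.ofNat_ne_zero, not_false_eq_true, zero_pow, Complex.exp_zero, one_mul]
  congr 1
  · congr 1; push_cast; ring
  · congr 1; push_cast; field_simp

theorem T3_mod (ha : 0 < a) : T3 a 0 = (Real.sqrt a)⁻¹ * T3 (1/a) 0 := by
  unfold T3
  rw [Uth_modular ha]
  simp
theorem T2_mod (ha : 0 < a) : T2 a 0 = (Real.sqrt a)⁻¹ * T4 (1/a) 0 := by
  unfold T2 T4 T3
  have hpi : (Real.pi : ℂ) ≠ 0 := by exact_mod_cast Real.pi_ne_zero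
  have ha' : (a : ℂ) ≠ 0 := by exact_mod_cast ha.ne'
  rw [Uth_half ha, Uth_modular ha]
  have e : -Complex.I * (((0:ℝ):ℂ) + Complex.I*Real.pi*a/2)/a = ((0 + Real.pi/2 : ℝ) : ℂ) := by
    push_cast; field_simp; simp
    linear_combination (-(Real.pi:ℂ)*a) * Complex.I_sq
  rw [e, show ∀ A B C D : ℂ, A * (B * C * D) = (B * (A * C) * D) from fun _ _ _ _ => by ring, ← Complex.exp_add]
  have e2 : (-Real.pi*a/4 + Complex.I*((0:ℝ):ℂ) + -((((0:ℝ):ℂ) + Complex.I*Real.pi*a/2))^2/(Real.pi*a) : ℂ) = 0 := by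
    push_cast; field_simp; simp
    linear_combination (-4*(Real.pi:ℂ)^2*a^2) * Complex.I_sq
  rw [e2, Complex.exp_zero, mul_one, Complex.re_ofReal_mul]
theorem T4_mod (ha : 0 < a) : T4 a 0 = (Real.sqrt a)⁻¹ * T2 (1/a) 0 := by
  have ha' : 0 < 1/a := by positivity
  rw [T2_mod ha']
  simp
  have : Real.sqrt a ≠ 0 := (Real.sqrt_pos.2 ha).ne'
  field_simp
theorem T2_pos (ha : 0 < a) : 0 < T2 a 0 := by
  rw [T2_mod ha]
  have := T4_pos (a := 1/a) (by positivity) 0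
  positivity

theorem th1_mod (ha : 0 < a) (z : ℂ) : Uth (1/2) a (z - Real.pi/2) =
   (((Real.sqrt a)⁻¹ : ℝ) : ℂ) * Complex.I * Complex.exp (-z^2/(Real.pi*a)) * Uth (1/2) (1/a) (-Complex.I*z/a - Real.pi/2) := by
  have hpi : (Real.pi : ℂ) ≠ 0 := by exact_mod_cast Real.pi_ne_zero
  have ha' : (a : ℂ) ≠ 0 := by exact_mod_cast ha.ne'
  have ha2 : 0 < 1/a := by positivity
  rw [Uth_half ha, Uth_modular ha, Uth_half ha2]
  have hp := Uth_add_pi 0 ha2 (-Complex.I*z/a - Real.pi/2 + Complex.I*Real.pi*(1/a : ℝ)/2)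
  simp only [Complex.ofReal_zero, mul_zero, Complex.exp_zero, one_mul] at hp
  rw [← hp]
  have e : -Complex.I * (z - Real.pi/2 + Complex.I*Real.pi*a/2)/a = -Complex.I*z/a - Real.pi/2 + Complex.I*Real.pi*(1/a : ℝ)/2 + Real.pi := by
    push_cast; field_simp
    linear_combination (-(Real.pi:ℂ)*a) * Complex.I_sq
  rw [e]
  have key : Complex.exp (-Real.pi*a/4 + Complex.I*(z - Real.pi/2)) * Complex.exp (-(z - Real.pi/2 + Complex.I*Real.pi*a/2)^2/(Real.pi*a)) = Complex.I * Complex.exp (-z^2/(Real.pi*a)) * Complex.exp (-Real.pi*(1/a:ℝ)/4 + Complex.I*(-Complex.I*z/a - Real.pi/2)) := by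
    have hI : Complex.I * Complex.exp (-z^2/(Real.pi*a)) = Complex.exp (Real.pi/2*Complex.I) * Complex.exp (-z^2/(Real.pi*a)) := by rw [Complex.exp_pi_div_two_mul_I]
    rw [hI, ← Complex.exp_add, ← Complex.exp_add, ← Complex.exp_add]
    congr 1
    push_cast
    field_simp
    ring_nf
    simp only [Complex.I_sq]
    ring
  linear_combination (((Real.sqrt a)⁻¹ : ℝ) : ℂ) * Uth 0 (1/a) (-Complex.I*z/a - Real.pi/2 + Complex.I*Real.pi*(1/a : ℝ)/2 + Real.pi) * key

/-- complex theta one derivative at zero -/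
theorem T1_mod (ha : 0 < a) : deriv (T1 a) 0 = (Real.sqrt a)⁻¹ * a⁻¹ * deriv (T1 (1/a)) 0 := by
  have key : ∀ b : ℝ, 0 < b → HasDerivAt (fun z : ℂ => Uth (1/2) b (z - Real.pi/2)) ((deriv (T1 b) 0 : ℝ) : ℂ) 0 := by
    intro b hb
    have hd : Differentiable ℂ (fun z : ℂ => Uth (1/2) b (z - Real.pi/2)) := (Uth_diff (1/2) hb).comp (by fun_prop)
    have h1 := (hd 0).hasDerivAt
    have h2 : HasDerivAt (fun x : ℝ => ((T1 b x : ℝ) : ℂ)) (deriv (fun z : ℂ => Uth (1/2) b (z - Real.pi/2)) 0) 0 := by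
      have := HasDerivAt.comp_ofReal (z := 0) (e := fun z : ℂ => Uth (1/2) b (z - Real.pi/2)) (by rw [Complex.ofReal_zero]; exact h1)
      refine this.congr_of_eventuallyEq (Filter.Eventually.of_forall fun x => ?_)
      simp only [T1]
      rw [T2_coe hb]; push_cast; rfl
    have h3 : HasDerivAt (fun x : ℝ => ((T1 b x : ℝ) : ℂ)) ((deriv (T1 b) 0 : ℝ) : ℂ) 0 :=
      (((T1_cd hb).differentiable (by simp)) 0).hasDerivAt.ofReal_comp
    rw [← h2.unique h3]
    exact h1
  have ha2 : 0 < 1/a := by positivity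
  have hA := key a ha
  have hB := key (1/a) ha2
  have hz : Uth (1/2) (1/a) (0 - Real.pi/2) = 0 := by
    have := T1_neg ha2 0
    have h2 := T2_coe ha2 (-(Real.pi/2))
    unfold T1 at this
    simp at this
    have : T2 (1/a) (-(Real.pi/2)) = 0 := by rw [one_div]; linarith
    rw [this] at h2
    push_cast at h2
    rw [zero_sub, ← h2]
  have hC : HasDerivAt (fun z : ℂ => Uth (1/2) (1/a) (-Complex.I*z/a - Real.pi/2)) (((deriv (T1 (1/a)) 0 : ℝ) : ℂ) * (-Complex.I/a)) 0 := by
    have hl : HasDerivAt (fun z : ℂ => -Complex.I*z/a) (-Complex.I/a) 0 := by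
      simpa using ((hasDerivAt_id (0:ℂ)).const_mul (-Complex.I)).div_const (a:ℂ)
    have hB' : HasDerivAt (fun z : ℂ => Uth (1/2) (1/a) (z - Real.pi/2)) ((deriv (T1 (1/a)) 0 : ℝ) : ℂ) (-Complex.I*0/a) := by simpa using hB
    exact hB'.comp (0:ℂ) hl
  have hE : HasDerivAt (fun z : ℂ => (((Real.sqrt a)⁻¹ : ℝ) : ℂ) * Complex.I * Complex.exp (-z^2/(Real.pi*a))) (deriv (fun z : ℂ => (((Real.sqrt a)⁻¹ : ℝ) : ℂ) * Complex.I * Complex.exp (-z^2/(Real.pi*a))) 0) 0 := by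
    apply DifferentiableAt.hasDerivAt
    fun_prop
  have hP := hE.mul hC
  have hfun : (fun z : ℂ => Uth (1/2) a (z - Real.pi/2)) = (fun z : ℂ => (((Real.sqrt a)⁻¹ : ℝ) : ℂ) * Complex.I * Complex.exp (-z^2/(Real.pi*a))) * (fun z : ℂ => Uth (1/2) (1/a) (-Complex.I*z/a - Real.pi/2)) := by
    funext z; exact th1_mod ha z
  rw [hfun] at hA
  have := hA.unique hP
  simp only [mul_zero, zero_div, hz] at this
  rw [← Complex.ofReal_inj, this]
  have ha' : (a : ℂ) ≠ 0 := by exact_mod_cast ha.ne'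
  push_cast
  simp
  ring_nf
  simp
end P10
end SP10

section SP11
section P11
variable {a : ℝ}
theorem T3_sq (ha : 0 < a) (x : ℝ) : T3 a x ^ 2 = T3 (2*a) (2*x) * T3 (2*a) 0 + T2 (2*a) (2*x) * T2 (2*a) 0 := by
  have := T3_prod ha x 0
  simp only [add_zero, sub_zero, mul_zero] at this
  rw [← this]; ring
theorem T2_sq (ha : 0 < a) (x : ℝ) : T2 a x ^ 2 = T2 (2*a) (2*x) * T3 (2*a) 0 + T3 (2*a) (2*x) * T2 (2*a) 0 := by
  have := T2_prod ha x 0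
  simp only [add_zero, sub_zero, mul_zero] at this
  rw [← this]; ring
theorem T4_prod (ha : 0 < a) (x y : ℝ) :
    T4 a (x+y) * T4 a (x-y) = T3 (2*a) (2*x) * T3 (2*a) (2*y) - T2 (2*a) (2*x) * T2 (2*a) (2*y) := by
  have := T3_prod ha (x + Real.pi/2) y
  rw [show 2 * (x + Real.pi/2) = 2*x + Real.pi by ring, T3_add_pi (by positivity), T2_add_pi (by positivity)] at this
  unfold T4
  rw [show x + y + Real.pi/2 = x + Real.pi/2 + y by ring, show x - y + Real.pi/2 = x + Real.pi/2 - y by ring, this]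
  ring
theorem T4_sq (ha : 0 < a) (x : ℝ) : T4 a x ^ 2 = T3 (2*a) (2*x) * T3 (2*a) 0 - T2 (2*a) (2*x) * T2 (2*a) 0 := by
  have := T4_prod ha x 0
  simp only [add_zero, sub_zero, mul_zero] at this
  rw [← this]; ring
theorem T1_sq (ha : 0 < a) (x : ℝ) : T1 a x ^ 2 = T3 (2*a) (2*x) * T2 (2*a) 0 - T2 (2*a) (2*x) * T3 (2*a) 0 := by
  have := T2_sq ha (x - Real.pi/2)
  have e1 := T3_add_pi (a := 2*a) (by positivity) (2*(x-Real.pi/2))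
  have e2 := T2_add_pi (a := 2*a) (by positivity) (2*(x-Real.pi/2))
  rw [show 2*(x-Real.pi/2) + Real.pi = 2*x by ring] at e1 e2
  unfold T1
  rw [this, e1, e2]; ring
theorem rel_c (ha : 0 < a) (x : ℝ) : T4 a 0^2 * T2 a x^2 = T2 a 0^2 * T4 a x^2 - T3 a 0^2*T1 a x^2 := by
  rw [T4_sq ha x, T2_sq ha x, T1_sq ha x, T4_sq ha 0, T2_sq ha 0, T3_sq ha 0]
  simp only [mul_zero]; ring
theorem rel_d (ha : 0 < a) (x : ℝ) : T4 a 0^2 * T3 a x^2 = T3 a 0^2 * T4 a x^2 - T2 a 0^2*T1 a x^2 := by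
  rw [T4_sq ha x, T3_sq ha x, T1_sq ha x, T4_sq ha 0, T2_sq ha 0, T3_sq ha 0]
  simp only [mul_zero]; ring
theorem rel_0 (ha : 0 < a) : T3 a 0^4 = T2 a 0^4 + T4 a 0^4 := by
  rw [show T3 a 0^4 = (T3 a 0^2)^2 by ring, show T2 a 0^4 = (T2 a 0^2)^2 by ring, show T4 a 0^4 = (T4 a 0^2)^2 by ring, T4_sq ha 0, T2_sq ha 0, T3_sq ha 0]
  simp only [mul_zero]; ring
theorem T4_prod' (ha : 0 < a) (x y : ℝ) : T4 a (x+y) * T4 a (x-y) * T4 a 0^2 = T4 a x^2 * T4 a y^2 - T1 a x^2*T1 a y^2 := by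
  rw [T4_prod ha, T4_sq ha x, T4_sq ha y, T1_sq ha x, T1_sq ha y, T4_sq ha 0]
  simp only [mul_zero]; ring
theorem T1_zero (ha : 0 < a) : T1 a 0 = 0 := by
  have := T1_neg ha 0
  simp at this; linarith

theorem T_hasDeriv {f : ℝ → ℝ} (h : ContDiff ℝ (⊤ : ℕ∞) f) (x : ℝ) : HasDerivAt f (deriv f x) x :=
  ((h.differentiable (by simp)) x).hasDerivAt

theorem deriv_even_zero {f : ℝ → ℝ} (h : ∀ x, f (-x) = f x) : deriv f 0 = 0 := by
  have : deriv f 0 = - deriv f 0 := by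
    conv_lhs => rw [show f = fun x => f (-x) from funext fun x => (h x).symm, deriv_comp_neg]
    simp
  linarith

theorem wron (ha : 0 < a) (x : ℝ) :
    (deriv (T1 a) x * T4 a x - T1 a x * deriv (T4 a) x) * (T2 a 0 * T3 a 0) = deriv (T1 a) 0 * T4 a 0 * (T2 a x * T3 a x) := by
  have ha2 : 0 < 2*a := by positivity
  set pr : ℝ → ℝ := fun y => (Uth (1/4) (2*a) ((2*y : ℝ) : ℂ)).re with hpr
  set pi : ℝ → ℝ := fun y => (Uth (1/4) (2*a) ((2*y : ℝ) : ℂ)).im with hpi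
  have cpr : ContDiff ℝ (⊤ : ℕ∞) pr := (Uth_re_contDiff (1/4) ha2).comp (g := fun y : ℝ => (Uth (1/4) (2*a) (y : ℂ)).re) (f := fun y : ℝ => 2*y) (by fun_prop)
  have cpi : ContDiff ℝ (⊤ : ℕ∞) pi := (Uth_im_contDiff (1/4) ha2).comp (g := fun y : ℝ => (Uth (1/4) (2*a) (y : ℂ)).im) (f := fun y : ℝ => 2*y) (by fun_prop)
  have hcj : ∀ y : ℝ, Uth (1/4) (2*a) ((2*(-y) : ℝ) : ℂ) = (starRingEnd ℂ) (Uth (1/4) (2*a) ((2*y : ℝ) : ℂ)) := fun y => by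
    rw [Uth_conj _ ha2]; congr 1; push_cast; ring
  have epr : ∀ y, pr (-y) = pr y := fun y => by simp only [hpr, hcj]; simp
  have epi : ∀ y, pi (-y) = - pi y := fun y => by simp only [hpi, hcj]; simp
  have dpr : deriv pr 0 = 0 := deriv_even_zero epr
  have pi0 : pi 0 = 0 := by have := epi 0; simp at this; linarith
  have h23 : ∀ x, T2 a x * T3 a x = 2 * (pr x * pr 0) := fun x => by
    have := T23_prod ha x 0
    simp only [add_zero, sub_zero] at this
    rw [this]
    change 2 * (pr x * pr 0 - pi x * pi 0) = _
    rw [pi0]; ring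
  have h14 : ∀ x, deriv (T1 a) x * T4 a x - T1 a x * deriv (T4 a) x = 2 * (pr x * deriv pi 0) := by
    intro x
    have hL : HasDerivAt (fun y => T1 a (x+y) * T4 a (x-y)) (deriv (T1 a) x * T4 a x - T1 a x * deriv (T4 a) x) 0 := by
      have h1 : HasDerivAt (fun y => T1 a (x+y)) (deriv (T1 a) x) 0 := by
        have := (T_hasDeriv (T1_cd ha) (x + 0)).comp_const_add x 0
        simpa using this
      have h4 : HasDerivAt (fun y => T4 a (x-y)) (- deriv (T4 a) x) 0 := by
        have := (T_hasDeriv (T4_cd ha) (x - 0)).comp_const_sub x 0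
        simpa using this
      have := h1.mul h4
      simp only [add_zero, sub_zero] at this
      rw [sub_eq_add_neg, ← mul_neg]; exact this
    have hR : HasDerivAt (fun y => 2 * (pr x * pi y + pi x * pr y)) (2 * (pr x * deriv pi 0 + pi x * deriv pr 0)) 0 :=
      (((T_hasDeriv cpi 0).const_mul _).add ((T_hasDeriv cpr 0).const_mul _)).const_mul 2
    have e : (fun y => T1 a (x+y) * T4 a (x-y)) = (fun y => 2 * (pr x * pi y + pi x * pr y)) := by
      funext y; exact T14_prod ha x y
    rw [e] at hL
    rw [hL.unique hR, dpr]; ring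
  have h0 := h14 0
  rw [T1_zero ha, zero_mul, sub_zero] at h0
  rw [h14, h23, h0, h23]; ring

theorem T1_hasSum (ha : 0 < a) (y : ℝ) : HasSum (fun n : ℕ => 2 * ((-1 : ℝ) ^ n * (Real.exp (-Real.pi*a)) ^ (((n : ℝ) + 1 / 2) ^ 2) *
    Real.sin ((2 * (n : ℝ) + 1) * y))) (T1 a y) := by
  have h := Complex.hasSum_re (Uth_hasSum (1/2) ha ((y - Real.pi/2 : ℝ) : ℂ))
  have e : ∀ n : ℤ, (Uterm (1/2) a ((y - Real.pi/2 : ℝ) : ℂ) n).re = Real.exp (-Real.pi*a*(n+1/2)^2) * Real.cos ((2*n+1)*(y - Real.pi/2)) := fun n => by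
    unfold Uterm
    rw [Complex.exp_add, show -(Real.pi:ℂ)*a*((n:ℂ)+((1/2:ℝ):ℂ))^2 = ((-Real.pi*a*(n+1/2)^2 : ℝ) : ℂ) by push_cast; ring, ← Complex.ofReal_exp, Complex.re_ofReal_mul,
      show 2*Complex.I*((n:ℂ)+((1/2:ℝ):ℂ))*((y-Real.pi/2:ℝ):ℂ) = (((2*n+1)*(y - Real.pi/2) : ℝ) : ℂ) * Complex.I by push_cast; ring, Complex.exp_ofReal_mul_I_re]
  have h := (funext e ▸ h).nat_add_neg_add_one
  refine h.congr_fun ?_ |> fun h => h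
  intro n
  rw [← Real.exp_mul]
  push_cast
  have e1 : Real.cos ((2*(n:ℝ)+1)*(y - Real.pi/2)) = (-1)^n * Real.sin ((2*n+1)*y) := by
    rw [← Real.sin_sub_nat_mul_pi, ← Real.cos_sub_pi_div_two]; congr 1; ring
  have e2 : (2*(-1 + -(n:ℝ))+1)*(y - Real.pi/2) = -((2*(n:ℝ)+1)*(y - Real.pi/2)) := by ring
  have e3 : (2*(-((n:ℝ)+1))+1)*(y - Real.pi/2) = -((2*(n:ℝ)+1)*(y - Real.pi/2)) := by ring
  have e4 : (-((n:ℝ)+1) + 1/2)^2 = ((n:ℝ)+1/2)^2 := by ring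
  rw [e3, Real.cos_neg, e1, e4]; ring

theorem theta1_eq (ha : 0 < a) (y : ℝ) : theta1R (Real.exp (-Real.pi*a)) y = T1 a y := by
  unfold theta1R
  rw [← tsum_mul_left]
  exact (T1_hasSum ha y).tsum_eq

theorem theta4_eq (ha : 0 < a) (y : ℝ) : theta4R (Real.exp (-Real.pi*a)) y = T4 a y := by
  have h := Complex.hasSum_re (Uth_hasSum 0 ha ((y + Real.pi/2 : ℝ) : ℂ))
  have e : ∀ n : ℤ, (Uterm 0 a ((y + Real.pi/2 : ℝ) : ℂ) n).re = Real.exp (-Real.pi*a*n^2) * Real.cos ((2*n)*(y + Real.pi/2)) := fun n => by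
    unfold Uterm
    rw [Complex.exp_add, show -(Real.pi:ℂ)*a*((n:ℂ)+((0:ℝ):ℂ))^2 = ((-Real.pi*a*n^2 : ℝ) : ℂ) by push_cast; ring, ← Complex.ofReal_exp, Complex.re_ofReal_mul,
      show 2*Complex.I*((n:ℂ)+((0:ℝ):ℂ))*((y+Real.pi/2:ℝ):ℂ) = (((2*n)*(y + Real.pi/2) : ℝ) : ℂ) * Complex.I by push_cast; ring, Complex.exp_ofReal_mul_I_re]
  have h := (funext e ▸ h).nat_add_neg
  have h := (hasSum_nat_add_iff' 1).2 h
  have hT : (Uth 0 a ((y + Real.pi/2 : ℝ) : ℂ)).re = T4 a y := rfl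
  rw [hT] at h
  simp at h
  unfold theta4R
  rw [← tsum_mul_left]
  have h2 := h.tsum_eq
  rw [show T4 a y = 1 + (T4 a y - 1) by ring, ← h2]
  congr 1
  apply tsum_congr
  intro n
  rw [← Real.exp_nat_mul]
  have e1 : Real.cos (2*((n:ℝ)+1)*(y + Real.pi/2)) = (-1)^(n+1) * Real.cos (2*((n:ℝ)+1)*y) := by
    rw [← Real.cos_add_nat_mul_pi]; congr 1; push_cast; ring
  have e2 : (2*(-1 + -(n:ℝ)))*(y + Real.pi/2) = -(2*((n:ℝ)+1)*(y + Real.pi/2)) := by ring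
  have e4 : (-1 + -(n:ℝ))^2 = ((n:ℝ)+1)^2 := by ring
  rw [e2, Real.cos_neg, e1, e4]
  push_cast
  rw [show ((n:ℝ)+1)^2 * (-Real.pi*a) = -(Real.pi*a*((n:ℝ)+1)^2) by ring]
  ring
end P11
end SP11

section SP12
section P12
variable {a : ℝ}
theorem abs_sin_nat_mul_le' (n : ℕ) (y : ℝ) : |Real.sin (n * y)| ≤ n * |Real.sin y| := by
  induction n with
  | zero => simp
  | succ n ih =>
    push_cast
    rw [add_mul, one_mul, Real.sin_add, add_mul, one_mul]
    refine (abs_add_le _ _).trans ?_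
    rw [abs_mul, abs_mul]
    have h1 := Real.abs_cos_le_one y
    have h2 := Real.abs_cos_le_one (n*y)
    have h3 := abs_nonneg (Real.sin y)
    have h4 := abs_nonneg (Real.sin (n*y))
    nlinarith

theorem Q_base (ha : 1 ≤ a) {y : ℝ} (hy : y ∈ Set.Ioo 0 Real.pi) : T1 a y ≠ 0 := by
  have ha0 : 0 < a := by linarith
  have hs : 0 < Real.sin y := Real.sin_pos_of_mem_Ioo hy
  have h := T1_hasSum ha0 y
  set q := Real.exp (-Real.pi*a) with hq
  have q0 : 0 < q := Real.exp_pos _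
  have q1 : q ≤ 1/4 := by
    have h3 : 3 ≤ Real.pi * a := by nlinarith [Real.pi_gt_three]
    have := Real.add_one_le_exp (Real.pi*a)
    rw [hq, neg_mul, Real.exp_neg, one_div]
    exact inv_anti₀ (by norm_num) (by linarith)
  have h' := (hasSum_nat_add_iff' 1).2 h
  set g0 := 2 * (q ^ ((1/4:ℝ)) * Real.sin y) with hg0
  have g0p : 0 < g0 := by positivity
  have hb : ∀ n : ℕ, ‖2 * ((-1 : ℝ) ^ (n+1) * q ^ ((((n+1:ℕ) : ℝ) + 1 / 2) ^ 2) *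
    Real.sin ((2 * ((n+1:ℕ) : ℝ) + 1) * y))‖ ≤ g0 * (1/4) * (1/4)^n := by
    intro n
    have e1 : q ^ ((((n+1:ℕ) : ℝ) + 1 / 2) ^ 2) = q^((1/4:ℝ)) * q^((n+1)*(n+2)) := by
      rw [← Real.rpow_natCast q, ← Real.rpow_add q0]; congr 1; push_cast; ring
    have e2 : q^((n+1)*(n+2)) ≤ (q^2)^(n+1) := by
      rw [← pow_mul]
      exact pow_le_pow_of_le_one q0.le (by linarith) (by nlinarith)
    have e3 : (q^2)^(n+1) ≤ (1/16)^(n+1) := by gcongr; nlinarith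
    have e4 : |Real.sin ((2 * ((n+1:ℕ) : ℝ) + 1) * y)| ≤ (2*((n+1:ℕ):ℝ)+1) * Real.sin y := by
      have := abs_sin_nat_mul_le' (2*(n+1)+1) y
      rw [abs_of_pos hs] at this
      push_cast at this ⊢; exact this
    have e5 : (2*((n+1:ℕ):ℝ)+1) ≤ 3^(n+1) := by
      clear * -
      induction n with
      | zero => norm_num
      | succ n ih => push_cast at *; rw [pow_succ]; linarith [n.cast_nonneg (α := ℝ)]
    rw [Real.norm_eq_abs, abs_mul, abs_mul, abs_mul, abs_pow, abs_neg, abs_one, one_pow, one_mul, e1, abs_two, abs_of_pos (by positivity)]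
    calc 2 * (q^((1/4:ℝ)) * q^((n+1)*(n+2)) * |Real.sin ((2 * ((n+1:ℕ) : ℝ) + 1) * y)|)
        ≤ 2 * (q^((1/4:ℝ)) * (1/16)^(n+1) * (3^(n+1) * Real.sin y)) := by
          gcongr
          · exact e2.trans e3
          · exact e4.trans (by gcongr)
      _ = g0 * ((1/16)^(n+1)*3^(n+1)) := by rw [hg0]; ring
      _ ≤ g0 * (1/4)^(n+1) := by
          gcongr
          rw [← mul_pow]; gcongr; norm_num
      _ = _ := by rw [pow_succ]; ring
  have hgeo : HasSum (fun n : ℕ => g0 * (1/4) * (1/4:ℝ)^n) (g0 * (1/4) * (1 - 1/4)⁻¹) :=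
    (hasSum_geometric_of_lt_one (by norm_num) (by norm_num)).mul_left _
  have := tsum_of_norm_bounded hgeo hb
  rw [h'.tsum_eq, Real.norm_eq_abs] at this
  have e0 : ∑ i ∈ Finset.range 1, 2 * ((-1 : ℝ) ^ i * q ^ (((i : ℝ) + 1 / 2) ^ 2) *
    Real.sin ((2 * (i : ℝ) + 1) * y)) = g0 := by
    simp [hg0]; norm_num
  rw [e0] at this
  intro h0
  rw [h0, zero_sub, abs_neg, abs_of_pos g0p] at this
  norm_num at this
  linarith

theorem T1_refl (ha : 0 < a) (y : ℝ) : T1 a (Real.pi - y) = T1 a y := by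
  unfold T1
  rw [← T2_neg ha]; congr 1; ring
theorem T1_pi2 : T1 a (Real.pi/2) = T2 a 0 := by unfold T1; simp

theorem Q_step (ha : 0 < a) (H : ∀ y ∈ Set.Ioo 0 Real.pi, T1 (2*a) y ≠ 0) : ∀ y ∈ Set.Ioo 0 Real.pi, T1 a y ≠ 0 := by
  have ha2 : 0 < 2*a := by positivity
  have key : ∀ x ∈ Set.Ioo 0 (Real.pi/2), T1 a x ≠ 0 := by
    intro x hx h0
    have h := T2_prod ha (x - Real.pi/4) (-(Real.pi/4))
    rw [show x - Real.pi/4 + -(Real.pi/4) = x - Real.pi/2 by ring, show 2*(x-Real.pi/4) = 2*x - Real.pi/2 by ring,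
      show 2 * (-(Real.pi/4)) = 0 - Real.pi/2 by ring] at h
    change T1 a x * _ = T1 (2*a) (2*x) * _ + _ * T1 (2*a) 0 at h
    rw [h0, T1_zero ha2] at h
    have := H (2*x) ⟨by linarith [hx.1], by linarith [hx.2]⟩
    have := T3_pos ha2 (0 - Real.pi/2)
    have h5 : T1 (2*a) (2*x) * T3 (2*a) (0 - Real.pi/2) = 0 := by linarith
    rcases mul_eq_zero.1 h5 with h6 | h6
    · contradiction
    · linarith
  intro y hy
  rcases lt_trichotomy y (Real.pi/2) with h | h | h
  · exact key y ⟨hy.1, h⟩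
  · rw [h, T1_pi2]; exact (T2_pos ha).ne'
  · rw [← T1_refl ha]; exact key _ ⟨by linarith [hy.2], by linarith⟩

theorem Q_all (ha : 0 < a) : ∀ y ∈ Set.Ioo 0 Real.pi, T1 a y ≠ 0 := by
  have : ∀ n : ℕ, ∀ a : ℝ, 0 < a → 1 ≤ 2^n * a → ∀ y ∈ Set.Ioo 0 Real.pi, T1 a y ≠ 0 := by
    intro n
    induction n with
    | zero => intro a _ h y hy; exact Q_base (by simpa using h) hy
    | succ n ih =>
      intro a ha h
      exact Q_step ha (ih (2*a) (by positivity) (by rw [pow_succ] at h; linarith))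
  obtain ⟨n, hn⟩ := pow_unbounded_of_one_lt (1/a) (show (1:ℝ) < 2 by norm_num)
  refine this n a ha ?_
  rw [div_lt_iff₀ ha] at hn; exact hn.le

theorem T1_pos (ha : 0 < a) {y : ℝ} (hy : y ∈ Set.Ioo 0 Real.pi) : 0 < T1 a y := by
  by_contra hn
  have hc : ContinuousOn (T1 a) (Set.uIcc y (Real.pi/2)) := (T1_cd ha).continuous.continuousOn
  have hm : (0:ℝ) ∈ Set.uIcc (T1 a y) (T1 a (Real.pi/2)) := by
    rw [Set.mem_uIcc]; left
    exact ⟨not_lt.1 hn, by rw [T1_pi2]; exact (T2_pos ha).le⟩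
  obtain ⟨z, hz, h0⟩ := intermediate_value_uIcc hc hm
  refine Q_all ha z ⟨?_, ?_⟩ h0
  · rcases Set.mem_uIcc.1 hz with h | h <;> linarith [hy.1, h.1, Real.pi_pos]
  · rcases Set.mem_uIcc.1 hz with h | h <;> linarith [hy.2, h.2, Real.pi_pos]

/-- modulus and scale -/
def kth (a : ℝ) : ℝ := T2 a 0^2 / T3 a 0^2
def rth (a : ℝ) : ℝ := deriv (T1 a) 0 * T3 a 0 / (T2 a 0 * T4 a 0)
def fth (a y : ℝ) : ℝ := T3 a 0 / T2 a 0 * (T1 a y / T4 a y)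
def cth (a y : ℝ) : ℝ := T4 a 0 / T2 a 0 * (T2 a y / T4 a y)
def dth (a y : ℝ) : ℝ := T4 a 0 / T3 a 0 * (T3 a y / T4 a y)

theorem kth_pos (ha : 0 < a) : 0 < kth a := by
  have := T2_pos ha; have := T3_pos ha 0; unfold kth; positivity
theorem kth_sq (ha : 0 < a) : 1 - kth a^2 = (T4 a 0^2/T3 a 0^2)^2 := by
  have := T3_pos ha 0
  have h := rel_0 ha
  unfold kth; field_simp; linarith
theorem kth_lt (ha : 0 < a) : kth a < 1 := by
  have := T3_pos ha 0; have := T4_pos ha 0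
  have h := kth_sq ha
  have : 0 < (T4 a 0^2/T3 a 0^2)^2 := by positivity
  have := kth_pos ha
  nlinarith
theorem kth_inv (ha : 0 < a) : kth (1/a) = Real.sqrt (1 - kth a^2) := by
  have h3 := T3_pos ha 0; have h4 := T4_pos ha 0
  rw [kth_sq ha, Real.sqrt_sq (by positivity)]
  have ha' : 0 < 1/a := by positivity
  have e3 := T3_mod ha; have e4 := T4_mod ha
  have := T3_pos ha' 0
  have hs := Real.sqrt_pos.2 ha
  unfold kth; rw [e3, e4]; field_simp
theorem rth_inv (ha : 0 < a) : rth (1/a) = a * rth a := by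
  have ha' : 0 < 1/a := by positivity
  have h3 := T3_pos ha' 0; have h4 := T4_pos ha' 0; have h2 := T2_pos ha'
  have hs := Real.sqrt_pos.2 ha
  unfold rth; rw [T3_mod ha, T4_mod ha, T2_mod ha, T1_mod ha]; field_simp

theorem cth_sq (ha : 0 < a) (y : ℝ) : cth a y^2 = 1 - fth a y^2 := by
  have := T4_pos ha y; have := T2_pos ha
  have h := rel_c ha y
  unfold cth fth; field_simp; linarith
theorem dth_sq (ha : 0 < a) (y : ℝ) : dth a y^2 = 1 - kth a^2 * fth a y^2 := by
  have := T4_pos ha y; have := T2_pos ha; have := T3_pos ha 0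
  have h := rel_d ha y
  unfold dth fth kth; field_simp; linarith
theorem dth_pos (ha : 0 < a) (y : ℝ) : 0 < dth a y := by
  have := T4_pos ha y; have := T4_pos ha 0; have := T3_pos ha 0; have := T3_pos ha y
  unfold dth; positivity

theorem fth_deriv (ha : 0 < a) (y : ℝ) : HasDerivAt (fth a) (rth a * (cth a y * dth a y)) y := by
  have p4 := T4_pos ha y; have p40 := T4_pos ha 0; have p3 := T3_pos ha 0; have p2 := T2_pos ha
  have h := ((T_hasDeriv (T1_cd ha) y).div (T_hasDeriv (T4_cd ha) y) p4.ne').const_mul (T3 a 0 / T2 a 0)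
  have w := wron ha y
  have e : rth a * (cth a y * dth a y) = T3 a 0 / T2 a 0 * ((deriv (T1 a) y * T4 a y - T1 a y * deriv (T4 a) y) / T4 a y ^ 2) := by
    rw [← eq_div_iff (by positivity)] at w
    rw [w]; unfold rth cth dth; field_simp
  rw [e]; exact h

theorem dth_deriv (ha : 0 < a) (y : ℝ) : HasDerivAt (dth a) (rth a * (-(kth a^2) * fth a y * cth a y)) y := by
  have p := dth_pos ha y
  have h := (((fth_deriv ha y).pow 2).const_mul (kth a^2)).const_sub 1
  have h2 := h.sqrt (by simp only [Pi.pow_apply]; rw [← dth_sq ha]; positivity)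
  have e : dth a = fun y => Real.sqrt (1 - kth a^2 * (fth a ^ 2) y) := by
    funext z; simp only [Pi.pow_apply]; rw [← dth_sq ha, Real.sqrt_sq (dth_pos ha z).le]
  rw [e]
  convert h2 using 1
  have : Real.sqrt (1 - kth a^2 * (fth a ^ 2) y) = dth a y := by rw [e]
  rw [this]; field_simp; norm_num; ring

theorem T_shift (ha : 0 < a) (y : ℝ) : T1 a (y + Real.pi/2) = T2 a y ∧ T4 a (y + Real.pi/2) = T3 a y ∧ T2 a (y + Real.pi/2) = - T1 a y ∧ T3 a (y + Real.pi/2) = T4 a y := by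
  refine ⟨by unfold T1; simp, ?_, ?_, rfl⟩
  · unfold T4; rw [← T3_add_pi ha y]; congr 1; ring
  · unfold T1; rw [← T2_add_pi ha (y - Real.pi/2)]; congr 1; ring

theorem cth_deriv (ha : 0 < a) (y : ℝ) : HasDerivAt (cth a) (rth a * (-fth a y * dth a y)) y := by
  have p4 := T4_pos ha y; have p40 := T4_pos ha 0; have p3 := T3_pos ha 0; have p2 := T2_pos ha; have p3y := T3_pos ha y
  have w := wron ha (y + Real.pi/2)
  have s1 : T2 a = fun y => T1 a (y + Real.pi/2) := funext fun y => (T_shift ha y).1.symm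
  have s3 : T3 a = fun y => T4 a (y + Real.pi/2) := funext fun y => (T_shift ha y).2.1.symm
  have d1 : deriv (T1 a) (y + Real.pi/2) = deriv (T2 a) y := by rw [s1, deriv_comp_add_const]
  have d3 : deriv (T4 a) (y + Real.pi/2) = deriv (T3 a) y := by rw [s3, deriv_comp_add_const]
  rw [d1, d3, (T_shift ha y).1, (T_shift ha y).2.1, (T_shift ha y).2.2.1, (T_shift ha y).2.2.2] at w
  have h := ((T_hasDeriv (T2_cd ha) y).div (T_hasDeriv (T3_cd ha) y) p3y.ne').const_mul (T3 a 0 / T2 a 0)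
  have h2 := h.mul (dth_deriv ha y)
  have e : cth a = (fun y => T3 a 0 / T2 a 0 * (T2 a / T3 a) y) * dth a := by
    funext z
    have := T3_pos ha z
    simp only [Pi.mul_apply, Pi.div_apply]
    unfold cth dth; field_simp
  have key : rth a * (-fth a y * dth a y) = T3 a 0 / T2 a 0 * ((deriv (T2 a) y * T3 a y - T2 a y * deriv (T3 a) y) / T3 a y ^ 2) * dth a y + T3 a 0 / T2 a 0 * (T2 a / T3 a) y * (rth a * (-(kth a^2) * fth a y * cth a y)) := by
    rw [← eq_div_iff (by positivity)] at w
    rw [w]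
    have e1 : T3 a 0 / T2 a 0 * (T2 a / T3 a) y = cth a y / dth a y := by
      simp only [Pi.div_apply]; unfold cth dth; field_simp
    have e2 : T3 a 0 / T2 a 0 * (deriv (T1 a) 0 * T4 a 0 * (-T1 a y * T4 a y) / (T2 a 0 * T3 a 0) / T3 a y ^ 2) = - rth a * (1 - kth a^2) * fth a y / dth a y^2 := by
      rw [kth_sq ha]; unfold rth fth dth; field_simp
    rw [e1, e2]
    have p := dth_pos ha y
    have hd := dth_sq ha y
    have hc := cth_sq ha y
    field_simp
    linear_combination (-rth a * fth a y) * hd + (rth a * fth a y * kth a^2) * hc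
  rw [e, key]; exact h2
end P12
end SP12

section SP13
section P13
variable {a : ℝ}
theorem T4_pi2 (ha : 0 < a) : T4 a (Real.pi/2) = T3 a 0 := by
  have := (T_shift ha 0).2.1; simpa using this
theorem fth_zero (ha : 0 < a) : fth a 0 = 0 := by unfold fth; rw [T1_zero ha]; simp
theorem fth_pi2 (ha : 0 < a) : fth a (Real.pi/2) = 1 := by
  have := T3_pos ha 0; have := T2_pos ha
  unfold fth; rw [T1_pi2, T4_pi2 ha]; field_simp
theorem rth_pos (ha : 0 < a) : 0 < rth a := by
  have p40 := T4_pos ha 0; have p3 := T3_pos ha 0; have p2 := T2_pos ha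
  have hne : rth a ≠ 0 := by
    intro h
    have := const_of_hasDerivAt_zero (f := fth a) (fun x => by simpa [h] using fth_deriv ha x) 0 (Real.pi/2)
    rw [fth_zero ha, fth_pi2 ha] at this
    norm_num at this
  have hge : 0 ≤ deriv (T1 a) 0 := by
    have hd := (T_hasDeriv (T1_cd ha) 0).hasDerivWithinAt (s := Set.Ioi 0)
    rw [hasDerivWithinAt_iff_tendsto_slope' (by simp)] at hd
    refine ge_of_tendsto hd ?_
    filter_upwards [Ioo_mem_nhdsGT Real.pi_pos] with y hy
    rw [slope_def_field, T1_zero ha]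
    have := T1_pos ha hy
    have := hy.1
    simp only [sub_zero]; positivity
  have : 0 ≤ rth a := by unfold rth; positivity
  exact lt_of_le_of_ne this hne.symm

theorem Jth (ha : 0 < a) : Jac (kth a) (fun x => fth a (x / rth a)) (fun x => cth a (x / rth a)) (fun x => dth a (x / rth a)) := by
  have r := rth_pos ha
  have p40 := T4_pos ha 0; have p3 := T3_pos ha 0; have p2 := T2_pos ha
  have hl : ∀ x, HasDerivAt (fun x => x / rth a) (1 / rth a) x := fun x => (hasDerivAt_id x).div_const _
  refine ⟨kth_pos ha, kth_lt ha, fun x => ?_, fun x => ?_, fun x => ?_, ?_, ?_, ?_⟩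
  · have := (fth_deriv ha (x / rth a)).comp x (hl x)
    refine this.congr_deriv ?_; field_simp
  · have := (cth_deriv ha (x / rth a)).comp x (hl x)
    refine this.congr_deriv ?_; field_simp
  · have := (dth_deriv ha (x / rth a)).comp x (hl x)
    refine this.congr_deriv ?_; field_simp
  · simp [fth_zero ha]
  · simp only [zero_div]; unfold cth; field_simp
  · simp only [zero_div]; unfold dth; field_simp

theorem Kth (ha : 0 < a) : Kcomp (kth a) = rth a * (Real.pi/2) := by
  have J := Jth ha
  have r := rth_pos ha
  have hK := Kcomp_pos J.k0 J.k1
  have p40 := T4_pos ha 0; have p2 := T2_pos ha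
  rcases lt_trichotomy (Kcomp (kth a)) (rth a * (Real.pi/2)) with h | h | h
  · exfalso
    have h1 := (J.sin_am (Kcomp (kth a))).2
    rw [J.am_K, Real.cos_pi_div_two] at h1
    set y := Kcomp (kth a) / rth a with hy
    have y0 : 0 < y := by positivity
    have y1 : y < Real.pi/2 := by rw [hy, div_lt_iff₀ r]; linarith
    have := T1_pos ha (y := y + Real.pi/2) ⟨by linarith, by linarith⟩
    rw [(T_shift ha y).1] at this
    have p4 := T4_pos ha y
    have : 0 < cth a y := by unfold cth; positivity
    linarith
  · exact h
  · exfalso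
    have := J.c_pos (x := rth a * (Real.pi/2)) ⟨by positivity, h⟩
    rw [mul_div_cancel_left₀ _ r.ne'] at this
    have h2 := (T_shift ha 0).2.2.1
    rw [zero_add, T1_zero ha] at h2
    unfold cth at this; rw [h2] at this; simp at this

theorem Kth_ratio (ha : 0 < a) : Kcomp (Real.sqrt (1 - kth a^2)) = a * Kcomp (kth a) := by
  rw [← kth_inv ha, Kth (by positivity), Kth ha, rth_inv ha]; ring

theorem Kcomp_lt {k l : ℝ} (h0 : 0 < k) (h : k < l) (h1 : l < 1) : Kcomp k < Kcomp l := by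
  unfold Kcomp
  have hk := Fell_cont h0 (h.trans h1)
  have hl := Fell_cont (h0.trans h) h1
  refine intervalIntegral.integral_lt_integral_of_continuousOn_of_le_of_exists_lt (by positivity) hk.continuousOn hl.continuousOn ?_ ?_
  · intro x _
    have := Fell_rad_pos (h0.trans h) h1 x
    refine inv_anti₀ (Real.sqrt_pos.2 this) (Real.sqrt_le_sqrt ?_)
    have : k^2 ≤ l^2 := by nlinarith
    nlinarith [sq_nonneg (Real.sin x)]
  · refine ⟨Real.pi/2, ⟨by positivity, le_refl _⟩, ?_⟩
    have := Fell_rad_pos (h0.trans h) h1 (Real.pi/2)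
    refine inv_strictAnti₀ (Real.sqrt_pos.2 this) (Real.sqrt_lt_sqrt this.le ?_)
    have : k^2 < l^2 := by nlinarith
    simp; nlinarith

theorem Kratio_lt {k l : ℝ} (h0 : 0 < k) (h : k < l) (h1 : l < 1) :
    Kcomp (Real.sqrt (1 - l^2)) / Kcomp l < Kcomp (Real.sqrt (1 - k^2)) / Kcomp k := by
  have a1 := Kcomp_lt h0 h h1
  have hl : 0 < 1 - l^2 := by nlinarith
  have hk : 1 - k^2 < 1 := by nlinarith
  have s1 : Real.sqrt (1 - k^2) < 1 := by rw [Real.sqrt_lt' one_pos]; linarith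
  have s2 : Real.sqrt (1 - l^2) < Real.sqrt (1 - k^2) := Real.sqrt_lt_sqrt hl.le (by nlinarith)
  have a2 := Kcomp_lt (Real.sqrt_pos.2 hl) s2 s1
  have a3 := Kcomp_pos h0 (h.trans h1)
  have a4 := Kcomp_pos (Real.sqrt_pos.2 hl) (s2.trans s1)
  exact div_lt_div₀ a2 a1.le (a4.trans a2).le a3

theorem kth_surj {k : ℝ} (h0 : 0 < k) (h1 : k < 1) : 0 < Kcomp (Real.sqrt (1 - k^2)) / Kcomp k ∧ kth (Kcomp (Real.sqrt (1 - k^2)) / Kcomp k) = k := by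
  have hk : 0 < 1 - k^2 := by nlinarith
  have s1 : Real.sqrt (1 - k^2) < 1 := by rw [Real.sqrt_lt' one_pos]; nlinarith
  have a3 := Kcomp_pos h0 h1
  have a4 := Kcomp_pos (Real.sqrt_pos.2 hk) s1
  have ha : 0 < Kcomp (Real.sqrt (1 - k^2)) / Kcomp k := by positivity
  refine ⟨ha, ?_⟩
  set a := Kcomp (Real.sqrt (1 - k^2)) / Kcomp k with hadef
  have hr := Kth_ratio ha
  have hKp := Kcomp_pos (kth_pos ha) (kth_lt ha)
  have hr : Kcomp (Real.sqrt (1 - kth a^2)) / Kcomp (kth a) = a := by rw [hr]; field_simp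
  rcases lt_trichotomy (kth a) k with h | h | h
  · have := Kratio_lt (kth_pos ha) h h1; rw [hr] at this; linarith
  · exact h
  · have := Kratio_lt h0 h (kth_lt ha); rw [hr] at this; linarith

theorem Jac_unique {k : ℝ} {s c d s' c' d' : ℝ → ℝ} (J : Jac k s c d) (J' : Jac k s' c' d') (x : ℝ) :
    s x = s' x ∧ c x = c' x ∧ d x = d' x := by
  have h : Jac.am d x = Jac.am d' x := (Fell_strictMono J.k0 J.k1).injective (by rw [J.Fell_am, J'.Fell_am])
  refine ⟨?_, ?_, ?_⟩
  · rw [(J.sin_am x).1, (J'.sin_am x).1, h]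
  · rw [(J.sin_am x).2, (J'.sin_am x).2, h]
  · rw [J.d_eq_sqrt, J'.d_eq_sqrt, h]

theorem T4_log (ha : 0 < a) : ∃ m : ℝ, ∀ x, (deriv (deriv (T4 a)) x * T4 a x - deriv (T4 a) x^2) / T4 a x^2 = m - (deriv (T1 a) 0)^2 / T4 a 0^2 * (T1 a x/T4 a x)^2 := by
  have cd4 : ContDiff ℝ (⊤ : ℕ∞) (deriv (T4 a)) := (T4_cd ha).iterate_deriv 1
  have cd1 : ContDiff ℝ (⊤ : ℕ∞) (deriv (T1 a)) := (T1_cd ha).iterate_deriv 1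
  have hp : ∀ (f : ℝ → ℝ), ContDiff ℝ (⊤ : ℕ∞) f → ∀ x y, HasDerivAt (fun y => f (x+y)) (deriv f (x+y)) y := fun f hf x y =>
    (T_hasDeriv hf (x + y)).comp_const_add x y
  have hm : ∀ (f : ℝ → ℝ), ContDiff ℝ (⊤ : ℕ∞) f → ∀ x y, HasDerivAt (fun y => f (x-y)) (-deriv f (x-y)) y := fun f hf x y =>
    (T_hasDeriv hf (x - y)).comp_const_sub x y
  have h4 := T_hasDeriv (T4_cd ha)
  have h1 := T_hasDeriv (T1_cd ha)
  have h44 := T_hasDeriv cd4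
  have h11 := T_hasDeriv cd1
  have p0 := T4_pos ha 0
  refine ⟨deriv (deriv (T4 a)) 0 / T4 a 0, fun x => ?_⟩
  have first : ∀ y, (deriv (T4 a) (x+y) * T4 a (x-y) + T4 a (x+y) * (-deriv (T4 a) (x-y))) * T4 a 0^2 =
      T4 a x^2 * (2 * (T4 a y * deriv (T4 a) y)) - T1 a x^2 * (2 * (T1 a y * deriv (T1 a) y)) := by
    intro y
    have L := ((hp _ (T4_cd ha) x y).mul (hm _ (T4_cd ha) x y)).mul_const (T4 a 0^2)
    have R := (((h4 y).mul (h4 y)).const_mul (T4 a x^2)).sub (((h1 y).mul (h1 y)).const_mul (T1 a x^2))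
    have R' := R.congr_of_eventuallyEq (f₁ := fun y => T4 a (x+y) * T4 a (x-y) * T4 a 0^2) (Filter.Eventually.of_forall fun y => by
      have := T4_prod' ha x y
      simp only [Pi.mul_apply, Pi.sub_apply]
      rw [this]; ring)
    have := HasDerivAt.unique L R'
    rw [this]; ring
  have L := (((hp _ cd4 x 0).mul (hm _ (T4_cd ha) x 0)).add ((hp _ (T4_cd ha) x 0).mul (hm _ cd4 x 0).neg)).mul_const (T4 a 0^2)
  have R := ((((h4 0).mul (h44 0)).const_mul 2).const_mul (T4 a x^2)).sub ((((h1 0).mul (h11 0)).const_mul 2).const_mul (T1 a x^2))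
  have R' := R.congr_of_eventuallyEq (f₁ := fun y => (deriv (T4 a) (x+y) * T4 a (x-y) + T4 a (x+y) * (-deriv (T4 a) (x-y))) * T4 a 0^2) (Filter.Eventually.of_forall fun y => first y)
  have := HasDerivAt.unique L R'
  rw [deriv_even_zero (T4_neg ha), T1_zero ha] at this
  simp only [add_zero, sub_zero, Pi.neg_apply] at this
  have p := T4_pos ha x
  field_simp
  linear_combination (1/2) * this

theorem final_T {k : ℝ} {s c d : ℝ → ℝ} (J : Jac k s c d) {α : ℝ} (hα : α ∈ Set.Ioo 0 (Kcomp k)) (x₀ : ℝ) :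
    (∀ w : ℝ × ℝ, 0 < Dden k s c d α x₀ w) ∧
    ContDiff ℝ (⊤ : ℕ∞) (uhat k s c d α x₀) ∧
    (∀ w : ℝ × ℝ,
      ut (uhat k s c d α x₀) w
      - 6 * (uhat k s c d α x₀ w) ^ 2 * ux (uhat k s c d α x₀) w
      + ux (ux (ux (uhat k s c d α x₀))) w = 0) := by
  obtain ⟨ha, hk⟩ := kth_surj J.k0 J.k1
  set a := Kcomp (Real.sqrt (1 - k^2)) / Kcomp k with hadef
  have Ja := Jth ha
  have r := rth_pos ha
  have hK := Kth ha
  rw [hk] at Ja hK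
  have U := Jac_unique J Ja
  have hn : nome k = Real.exp (-Real.pi*a) := by unfold nome; rw [hadef]; congr 1; ring
  have hx : ∀ x, Real.pi * x / (2 * Kcomp k) = x / rth a := fun x => by
    rw [hK]; have := Real.pi_pos; field_simp
  have eT : ∀ x, THf k x = T4 a (x / rth a) := fun x => by unfold THf; rw [hn, hx, theta4_eq ha]
  have eH : ∀ x, Hf k x = T1 a (x / rth a) := fun x => by unfold Hf; rw [hn, hx, theta1_eq ha]
  have p40 := T4_pos ha 0; have p3 := T3_pos ha 0; have p2 := T2_pos ha
  have hpos : ∀ x, 0 < THf k x := fun x => by rw [eT]; exact T4_pos ha _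
  have hc : ContDiff ℝ (⊤ : ℕ∞) (THf k) := by
    rw [funext eT]; exact (T4_cd ha).comp (by fun_prop)
  have hcH : ContDiff ℝ (⊤ : ℕ∞) (Hf k) := by
    rw [funext eH]; exact (T1_cd ha).comp (by fun_prop)
  have hsk : Real.sqrt k = T2 a 0 / T3 a 0 := by
    rw [← hk]; unfold kth; rw [← div_pow, Real.sqrt_sq (by positivity)]
  have h1 : ∀ x, Hf k x = √k * (THf k x * s x) := fun x => by
    have p := T4_pos ha (x / rth a)
    rw [eH, eT, (U x).1, hsk]; unfold fth; field_simp
  have hprod : ∀ x y, THf k (x+y) * THf k (x-y) * THf k 0^2 = THf k x^2 * THf k y^2 * (1 - k^2 * s x^2 * s y^2) := by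
    intro x y
    have hk4 : k^2 = (√k)^4 := by
      rw [show (√k)^4 = ((√k)^2)^2 by ring, Real.sq_sqrt J.k0.le]
    have e : THf k x^2 * THf k y^2 * (1 - k^2 * s x^2 * s y^2) = THf k x^2 * THf k y^2 - Hf k x^2 * Hf k y^2 := by
      rw [h1, h1, hk4]; ring
    rw [e]
    simp only [eT, eH, add_div, sub_div, zero_div]
    exact T4_prod' ha _ _
  have hT : ∀ x, HasDerivAt (THf k) (Zjac k d x * THf k x) x := by
    obtain ⟨m, hm⟩ := T4_log ha
    have cd4 : ContDiff ℝ (⊤ : ℕ∞) (deriv (T4 a)) := (T4_cd ha).iterate_deriv 1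
    have hl : ∀ x, HasDerivAt (fun x => x / rth a) (1 / rth a) x := fun x => (hasDerivAt_id x).div_const _
    set L : ℝ → ℝ := fun x => (deriv (T4 a) (x / rth a) / T4 a (x / rth a)) / rth a with hL
    have hLd : ∀ x, HasDerivAt L ((m / rth a^2 - 1) + d x^2) x := by
      intro x
      have p := T4_pos ha (x / rth a)
      have h := (((T_hasDeriv cd4 (x / rth a)).div (T_hasDeriv (T4_cd ha) (x / rth a)) p.ne').comp x (hl x)).div_const (rth a)
      refine h.congr_deriv ?_
      rw [show deriv (deriv (T4 a)) (x / rth a) * T4 a (x / rth a) - deriv (T4 a) (x / rth a) * deriv (T4 a) (x / rth a) = deriv (deriv (T4 a)) (x / rth a) * T4 a (x / rth a) - deriv (T4 a) (x / rth a)^2 by ring, hm, J.d2, (U x).1]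
      have e : k^2 * fth a (x / rth a)^2 = (deriv (T1 a) 0)^2 / T4 a 0^2 * (T1 a (x / rth a)/T4 a (x / rth a))^2 / rth a^2 := by
        have hr : deriv (T1 a) 0 = rth a * (T2 a 0 * T4 a 0) / T3 a 0 := by unfold rth; field_simp
        rw [hr, ← hk]; unfold fth kth; field_simp
      rw [e]; field_simp; ring
    have hdiff : ∀ x, HasDerivAt (fun x => L x - Zjac k d x - (m / rth a^2 - 1 + Ecomp k / Kcomp k) * x) 0 x := by
      intro x
      refine (((hLd x).sub (J.Z_deriv x)).sub ((hasDerivAt_id x).const_mul (m / rth a^2 - 1 + Ecomp k / Kcomp k))).congr_deriv ?_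
      ring
    have hLeq : ∀ x, L x = Zjac k d x := by
      have L0 : L 0 = 0 := by simp only [hL, zero_div]; rw [deriv_even_zero (T4_neg ha)]; simp
      have s3 : T3 a = fun y => T4 a (y + Real.pi/2) := funext fun y => (T_shift ha y).2.1.symm
      have d3 : deriv (T4 a) (Real.pi/2) = 0 := by
        rw [← deriv_even_zero (T3_neg ha), s3, deriv_comp_add_const, zero_add]
      have LK : L (Kcomp k) = 0 := by
        simp only [hL]; rw [hK, mul_div_cancel_left₀ _ r.ne', d3]; simp
      have h0 := const_of_hasDerivAt_zero hdiff (Kcomp k) 0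
      simp only [L0, LK, J.Z_K, Jac.Z_zero, mul_zero, sub_zero, zero_sub, neg_eq_zero] at h0
      have hKp := Kcomp_pos J.k0 J.k1
      have hm0 := (mul_eq_zero.1 h0).resolve_right hKp.ne'
      intro x
      have hx0 := const_of_hasDerivAt_zero hdiff x 0
      simp only [L0, Jac.Z_zero, mul_zero, sub_zero, hm0, zero_mul] at hx0
      linarith
    intro x
    have p := T4_pos ha (x / rth a)
    rw [← hLeq x, funext eT]
    refine ((T_hasDeriv (T4_cd ha) (x / rth a)).comp x (hl x)).congr_deriv ?_
    simp only [hL]; field_simp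
  exact final_reduction J h1 hT hpos hprod hc hcH hα x₀
end P13
end SP13

/-- The dark breather on the snoidal wave background: its denominator is strictly positive
everywhere, and `û` is a smooth solution of the defocusing mKdV equation
`û_t − 6û²û_x + û_xxx = 0` on `ℝ × ℝ`. -/
theorem dark_breather_solves_mkdv
    (k : ℝ) (hk : k ∈ Set.Ioo (0 : ℝ) 1)
    (sn cn dn : ℝ → ℝ)
    (hsn : ∀ x, HasDerivAt sn (cn x * dn x) x)
    (hcn : ∀ x, HasDerivAt cn (-(sn x * dn x)) x)
    (hdn : ∀ x, HasDerivAt dn (-(k ^ 2 * sn x * cn x)) x)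
    (hsn0 : sn 0 = 0) (hcn0 : cn 0 = 1) (hdn0 : dn 0 = 1)
    (α : ℝ) (hα : α ∈ Set.Ioo 0 (Kcomp k)) (x₀ : ℝ) :
    (∀ w : ℝ × ℝ, 0 < Dden k sn cn dn α x₀ w) ∧
    ContDiff ℝ (⊤ : ℕ∞) (uhat k sn cn dn α x₀) ∧
    (∀ w : ℝ × ℝ,
      ut (uhat k sn cn dn α x₀) w
      - 6 * (uhat k sn cn dn α x₀ w) ^ 2 * ux (uhat k sn cn dn α x₀) w
      + ux (ux (ux (uhat k sn cn dn α x₀))) w = 0) := by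
  exact final_T ⟨hk.1, hk.2, hsn, hcn, hdn, hsn0, hcn0, hdn0⟩ hα x₀

end
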